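/- Let n ≥ 3, p ≥ 1, and let K ⊆ ℝⁿ be a star body (star-shaped about the origin with radial function positive and continuous on S^{n-1}). Then equality V(K) · V(Λ_p°K) = ω_n² holds if and only if K = r·Bⁿ for some r > 0, i.e., K is a Euclidean ball centered at the origin. -/

import Mathlib

/-!
Write `Φ(K) = V(K) V(Λ_p°K)` (`volProd`) and consider the energy `I(K, L) = ∫_L ∫_K [x,y]^p dy dx`.

*Energy and polarity.* `Λ_p°K` is a sublevel set of the `p`-homogeneous function
`x ↦ ∫_K [x,y]^p dy` (`sineMoment`), so by the bathtub principle, for fixed `K`, the energy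
`I(K, L)` is minimal among sets `L` of given volume exactly at the dilates of `Λ_p°K`, up to null
sets (`bathtub`, `energy_ge`), and `I(K, Λ_p°K)` is a fixed multiple of `Φ(K)` (`energy_polar`).
Applying this to the pair `(Λ_p°K, K)` gives `Φ(K) ≤ Φ(Λ_p°K)`, with equality only if `K` is, up to a
null set, a sublevel set of the moment function of `Λ_p°K` (`volProd_le_polar`). As `Λ_p°K` is an
origin-symmetric convex body, only such bodies matter for the maximum of `Φ`.

*Existence of a maximiser.* Normalise a body to have circumradius one. If `t` is the radius of the
thinnest cylinder containing it around a longest axis, then `V(K) = O(t^{n-1})` and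
`V(Λ_p°K) = O(1/t)` (`apriori`), so `Φ(K) = O(t)` because `n ≥ 3`. Maximising sequences thus stay
nondegenerate, and Blaschke selection yields a maximiser (`exists_max`).

*Maximisers are balls.* Apply Steiner symmetrisation in a direction `u` to a maximiser `L` and to
`M = Λ_p°L` simultaneously. Both symmetrisations are shears by midpoint functions `f`, `g`, and the
pair of symmetrals is the midpoint of `(L, M)` and its reflection. Along this motion `[x,y]^p` is
convex, strictly for almost all pairs unless `f` and `g` vanish (`sinePair_rpow_mid`). Maximality of
`L` forbids a decrease of the energy, so `f = 0` almost everywhere and `L` is symmetric about every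
hyperplane (`IsBody.reflect_mem`), hence a ball (`IsBody.eq_closedBall`).

*The constant.* Evaluating `∫ [e,y]^p exp(-|y|²) dy` by layers and in product coordinates gives
`∫_B [e,y]^p dy = c̃_{n,p} ω_n` for a unit vector `e`, that is `Λ_p°B = B`, and `Φ = ω_n²` on balls
(`volProd_closedBall`).

*Equality.* If `Φ(K) = ω_n²`, then `Φ(Λ_p°K)` is also maximal, so `Λ_p°K` is a ball; by the equality
case of `Φ(K) ≤ Φ(Λ_p°K)`, `K` agrees with a ball up to a null set, and a star body that does so is
that ball.
-/

open MeasureTheory Metric Set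
open scoped RealInnerProductSpace ENNReal

noncomputable section

/-- `[x,y]`: the area of the parallelogram spanned by `x` and `y`. -/
def sinePair {n : ℕ} (x y : EuclideanSpace ℝ (Fin n)) : ℝ :=
  Real.sqrt (‖x‖ ^ 2 * ‖y‖ ^ 2 - ⟪x, y⟫ ^ 2)

/-- `ω_q = π^{q/2}/Γ(1+q/2)`. -/
def omegaVol (q : ℝ) : ℝ := Real.pi ^ (q / 2) / Real.Gamma (1 + q / 2)

/-- The rotation invariant probability measure on the unit sphere `S^{n-1}`. -/
def sphereProb (n : ℕ) : Measure (sphere (0 : EuclideanSpace ℝ (Fin n)) 1) :=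
  ((volume : Measure (EuclideanSpace ℝ (Fin n))).toSphere univ)⁻¹ •
    (volume : Measure (EuclideanSpace ℝ (Fin n))).toSphere

/-- The radial function of a set star-shaped about the origin. -/
def radialFn {n : ℕ} (K : Set (EuclideanSpace ℝ (Fin n))) (u : EuclideanSpace ℝ (Fin n)) : ℝ :=
  sSup {r : ℝ | 0 ≤ r ∧ r • u ∈ K}

/-- `K` is star-shaped about the origin. -/
def IsStarShaped {n : ℕ} (K : Set (EuclideanSpace ℝ (Fin n))) : Prop :=
  0 ∈ K ∧ ∀ x ∈ K, ∀ t : ℝ, 0 ≤ t → t ≤ 1 → t • x ∈ K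

/-- `K` is a star body: star-shaped about the origin, with radial function positive and
continuous on the unit sphere, and `K = {r • u : u ∈ S^{n-1}, 0 ≤ r ≤ ρ_K(u)}`. -/
def IsStarBody {n : ℕ} (K : Set (EuclideanSpace ℝ (Fin n))) : Prop :=
  IsStarShaped K ∧
  (∀ u ∈ sphere (0 : EuclideanSpace ℝ (Fin n)) 1, 0 < radialFn K u) ∧
  ContinuousOn (radialFn K) (sphere (0 : EuclideanSpace ℝ (Fin n)) 1) ∧
  ∀ u ∈ sphere (0 : EuclideanSpace ℝ (Fin n)) 1, ∀ r : ℝ, 0 ≤ r →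
    (r • u ∈ K ↔ r ≤ radialFn K u)

/-- The constant `c̃_{n,p}`. -/
def tildeC (n : ℕ) (p : ℝ) : ℝ :=
  ((n : ℝ) - 1) * omegaVol ((n : ℝ) - 1) * omegaVol ((n : ℝ) + p - 2) /
    (((n : ℝ) + p) * omegaVol (n : ℝ) * omegaVol ((n : ℝ) + p - 3))

/-- The polar body `Λ_p°K` of the `L_p`-sine centroid body of `K`. -/
def sineCentroidPolar (n : ℕ) (p : ℝ) (K : Set (EuclideanSpace ℝ (Fin n))) :
    Set (EuclideanSpace ℝ (Fin n)) :=
  {x | ∫ y in K, sinePair x y ^ p ≤ tildeC n p * (volume K).toReal}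

/-- The sine polar body `K^◇`. -/
def sinePolar {n : ℕ} (K : Set (EuclideanSpace ℝ (Fin n))) : Set (EuclideanSpace ℝ (Fin n)) :=
  {x | ∀ y ∈ K, sinePair x y ≤ 1}

/-- The closed solid cylinder `C⁻(u,r)`. -/
def solidCylinder {n : ℕ} (u : EuclideanSpace ℝ (Fin n)) (r : ℝ) :
    Set (EuclideanSpace ℝ (Fin n)) := {x | sinePair x u ≤ r}

/-- `K ∈ C_e^n`: an origin-symmetric convex body that is an intersection of closed solid
cylinders. -/
def IsCylBody {n : ℕ} (K : Set (EuclideanSpace ℝ (Fin n))) : Prop :=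
  IsCompact K ∧ Convex ℝ K ∧ (interior K).Nonempty ∧ (∀ x ∈ K, -x ∈ K) ∧
  ∃ I : Set (EuclideanSpace ℝ (Fin n) × ℝ),
    (∀ c ∈ I, c.1 ∈ sphere (0 : EuclideanSpace ℝ (Fin n)) 1 ∧ 0 < c.2) ∧
    K = ⋂ c ∈ I, solidCylinder c.1 c.2

/-- The cylindrical hull of a set. -/
def cylHull {n : ℕ} (E : Set (EuclideanSpace ℝ (Fin n))) : Set (EuclideanSpace ℝ (Fin n)) :=
  ⋂ c ∈ {c : EuclideanSpace ℝ (Fin n) × ℝ |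
      c.1 ∈ sphere (0 : EuclideanSpace ℝ (Fin n)) 1 ∧ 0 < c.2 ∧ E ⊆ solidCylinder c.1 c.2},
    solidCylinder c.1 c.2

/-- The cylindrical support function `c_K`. -/
def cylSupport {n : ℕ} (K : Set (EuclideanSpace ℝ (Fin n))) (x : EuclideanSpace ℝ (Fin n)) : ℝ :=
  sSup ((fun y => sinePair x y) '' K)

/-- The support function `h_K`. -/
def suppFn {n : ℕ} (K : Set (EuclideanSpace ℝ (Fin n))) (x : EuclideanSpace ℝ (Fin n)) : ℝ :=
  sSup ((fun y => ⟪x, y⟫) '' K)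

section Auxiliary

open scoped Pointwise

/-! ### The area `[x, y]` -/

section SinePair

variable {n : ℕ}

local notation "E" => EuclideanSpace ℝ (Fin n)

lemma inner_sq_le (x y : E) : ⟪x, y⟫ ^ 2 ≤ ‖x‖ ^ 2 * ‖y‖ ^ 2 := by
  have h := abs_real_inner_le_norm x y
  calc ⟪x, y⟫ ^ 2 = |⟪x, y⟫| ^ 2 := (sq_abs _).symm
    _ ≤ (‖x‖ * ‖y‖) ^ 2 := by gcongr
    _ = _ := by ring

lemma sinePair_nonneg (x y : E) : 0 ≤ sinePair x y := Real.sqrt_nonneg _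

lemma sinePair_sq (x y : E) : sinePair x y ^ 2 = ‖x‖ ^ 2 * ‖y‖ ^ 2 - ⟪x, y⟫ ^ 2 :=
  Real.sq_sqrt (by linarith [inner_sq_le x y])

lemma sinePair_comm (x y : E) : sinePair x y = sinePair y x := by
  unfold sinePair
  rw [real_inner_comm, mul_comm]

lemma sinePair_self (x : E) : sinePair x x = 0 := by
  unfold sinePair
  rw [real_inner_self_eq_norm_sq, ← sq, sub_self, Real.sqrt_zero]

lemma sinePair_eq_norm (x y : E) :
    sinePair x y = ‖‖y‖ • x - (⟪y, x⟫ / ‖y‖) • y‖ := by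
  have h : ‖‖y‖ • x - (⟪y, x⟫ / ‖y‖) • y‖ ^ 2 = sinePair x y ^ 2 := by
    rw [sinePair_sq, norm_sub_sq_real, norm_smul, norm_smul, inner_smul_left, inner_smul_right,
      real_inner_comm x y]
    by_cases hy : ‖y‖ = 0
    · have : y = 0 := norm_eq_zero.1 hy
      simp [this]
    · simp only [Real.norm_eq_abs, abs_norm, conj_trivial, mul_pow, abs_div]
      field_simp
      rw [sq_abs]
      ring
  exact ((sq_eq_sq₀ (norm_nonneg _) (sinePair_nonneg _ _)).1 h).symm

lemma sinePair_add_le (x x' y : E) : sinePair (x + x') y ≤ sinePair x y + sinePair x' y := by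
  rw [sinePair_eq_norm, sinePair_eq_norm x, sinePair_eq_norm x']
  refine le_trans (le_of_eq ?_) (norm_add_le _ _)
  congr 1
  rw [inner_add_right, add_div, add_smul, smul_add]
  abel

lemma sinePair_smul (t : ℝ) (x y : E) : sinePair (t • x) y = |t| * sinePair x y := by
  unfold sinePair
  rw [norm_smul, inner_smul_left, ← Real.sqrt_sq_eq_abs, ← Real.sqrt_mul (sq_nonneg t)]
  congr 1
  simp only [Real.norm_eq_abs, mul_pow, sq_abs, conj_trivial]
  ring

lemma sinePair_smul_right (t : ℝ) (x y : E) : sinePair x (t • y) = |t| * sinePair x y := by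
  rw [sinePair_comm, sinePair_smul, sinePair_comm]

lemma sinePair_neg (x y : E) : sinePair (-x) y = sinePair x y := by
  simpa using sinePair_smul (-1) x y

lemma sinePair_neg_right (x y : E) : sinePair x (-y) = sinePair x y := by
  simpa using sinePair_smul_right (-1) x y

lemma sinePair_add_right_le (x y y' : E) :
    sinePair x (y + y') ≤ sinePair x y + sinePair x y' := by
  rw [sinePair_comm, sinePair_comm x, sinePair_comm x]
  exact sinePair_add_le _ _ _

lemma sinePair_map (A : E ≃ₗᵢ[ℝ] E) (x y : E) : sinePair (A x) (A y) = sinePair x y := by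
  unfold sinePair
  rw [A.norm_map, A.norm_map, A.inner_map_map]

lemma continuous_sinePair : Continuous (fun z : E × E => sinePair z.1 z.2) := by
  unfold sinePair
  fun_prop

lemma continuous_sinePair_rpow {p : ℝ} (hp : 0 ≤ p) :
    Continuous (fun z : E × E => sinePair z.1 z.2 ^ p) :=
  continuous_sinePair.rpow_const (fun _ => Or.inr hp)

lemma sinePair_pos_of_not_mem_span {x y : E} (hx : x ≠ 0) (hy : y ∉ Submodule.span ℝ {x}) :
    0 < sinePair x y := by
  refine lt_of_le_of_ne (sinePair_nonneg x y) (fun h => hy ?_)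
  rw [sinePair_comm, sinePair_eq_norm] at h
  have h0 := sub_eq_zero.1 (norm_eq_zero.1 h.symm)
  rw [Submodule.mem_span_singleton]
  refine ⟨‖x‖⁻¹ * (⟪x, y⟫ / ‖x‖), ?_⟩
  rw [mul_smul, ← h0, smul_smul, inv_mul_cancel₀ (norm_ne_zero_iff.2 hx), one_smul]

/-- Splitting along a unit vector `u`: with `x₀`, `y₀` the components orthogonal to `u` and
`s, t` the `u`-coordinates, `[x, y]² = [x₀, y₀]² + |s y₀ - t x₀|²`. -/
lemma sinePair_sq_split {u : E} (hu : ‖u‖ = 1) (x y : E) :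
    sinePair x y ^ 2 = sinePair (x - ⟪x, u⟫ • u) (y - ⟪y, u⟫ • u) ^ 2 +
      ‖⟪x, u⟫ • (y - ⟪y, u⟫ • u) - ⟪y, u⟫ • (x - ⟪x, u⟫ • u)‖ ^ 2 := by
  have huu : ⟪u, u⟫ = 1 := by rw [real_inner_self_eq_norm_sq, hu]; norm_num
  simp only [sinePair_sq, ← real_inner_self_eq_norm_sq, inner_sub_left, inner_sub_right,
    inner_smul_left, inner_smul_right, conj_trivial, huu, real_inner_comm u, real_inner_comm x y]
  ring

/-- Midpoint convexity of `w ↦ √(A² + |w|²)`, strict when `A ≠ 0`. -/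
lemma sqrt_mid_le {A q0 q1 q2 : ℝ} {w0 w2 : E} (h0 : 0 ≤ q0) (h2 : 0 ≤ q2)
    (e0 : q0 ^ 2 = A ^ 2 + ‖w0‖ ^ 2) (e2 : q2 ^ 2 = A ^ 2 + ‖w2‖ ^ 2)
    (e1 : q1 ^ 2 = A ^ 2 + ‖(1 / 2 : ℝ) • (w0 + w2)‖ ^ 2) :
    q1 ≤ (q0 + q2) / 2 ∧ (A ≠ 0 → w0 ≠ w2 → q1 < (q0 + q2) / 2) := by
  have hw : ‖(1 / 2 : ℝ) • (w0 + w2)‖ ^ 2 = (‖w0‖ ^ 2 + 2 * ⟪w0, w2⟫ + ‖w2‖ ^ 2) / 4 := by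
    rw [norm_smul, mul_pow, norm_add_sq_real]
    norm_num
    ring
  have hd : ‖w0 - w2‖ ^ 2 = ‖w0‖ ^ 2 - 2 * ⟪w0, w2⟫ + ‖w2‖ ^ 2 := norm_sub_sq_real _ _
  have hc := inner_sq_le w0 w2
  have key : (q0 * q2) ^ 2 = (A ^ 2 + ⟪w0, w2⟫) ^ 2 + A ^ 2 * ‖w0 - w2‖ ^ 2 +
      (‖w0‖ ^ 2 * ‖w2‖ ^ 2 - ⟪w0, w2⟫ ^ 2) := by
    rw [mul_pow, e0, e2, hd]; ring
  have hq : 0 ≤ q0 * q2 := mul_nonneg h0 h2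
  constructor
  · have : A ^ 2 + ⟪w0, w2⟫ ≤ q0 * q2 := by
      apply abs_le_of_sq_le_sq' _ hq |>.2
      have : 0 ≤ A ^ 2 * ‖w0 - w2‖ ^ 2 := by positivity
      linarith
    apply abs_le_of_sq_le_sq' _ (by positivity) |>.2
    nlinarith
  · intro hA hne
    have hpos : 0 < A ^ 2 * ‖w0 - w2‖ ^ 2 := by
      have := norm_pos_iff.2 (sub_ne_zero.2 hne)
      positivity
    have : A ^ 2 + ⟪w0, w2⟫ < q0 * q2 := by
      apply lt_of_pow_lt_pow_left₀ 2 hq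
      linarith
    apply lt_of_pow_lt_pow_left₀ 2 (by positivity)
    nlinarith

/-- Convexity of `[x, y]^p` along the motion `τ ↦ (x - τ a u, y - τ b u)`, between `τ = 0`, `1`
and `2`; the inequality is strict as soon as the `u`-orthogonal parts of `x` and `y` are linearly
independent and the motion is not trivial. -/
lemma sinePair_rpow_mid {p : ℝ} (hp : 1 ≤ p) {u : E} (hu : ‖u‖ = 1) (x y : E) (a b : ℝ) :
    sinePair (x - a • u) (y - b • u) ^ p ≤
      (sinePair x y ^ p + sinePair (x - (2 * a) • u) (y - (2 * b) • u) ^ p) / 2 ∧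
    (sinePair (x - ⟪x, u⟫ • u) (y - ⟪y, u⟫ • u) ≠ 0 → (a ≠ 0 ∨ b ≠ 0) →
      sinePair (x - a • u) (y - b • u) ^ p <
      (sinePair x y ^ p + sinePair (x - (2 * a) • u) (y - (2 * b) • u) ^ p) / 2) := by
  have huu : ⟪u, u⟫ = 1 := by rw [real_inner_self_eq_norm_sq, hu]; norm_num
  set x' := x - ⟪x, u⟫ • u with hx'
  set y' := y - ⟪y, u⟫ • u with hy'
  have hx (c : ℝ) : (x - c • u) - ⟪x - c • u, u⟫ • u = x' := by
    rw [inner_sub_left, inner_smul_left, huu, hx']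
    simp only [conj_trivial, mul_one, sub_smul]
    abel
  have hy (c : ℝ) : (y - c • u) - ⟪y - c • u, u⟫ • u = y' := by
    rw [inner_sub_left, inner_smul_left, huu, hy']
    simp only [conj_trivial, mul_one, sub_smul]
    abel
  have hxi (c : ℝ) : ⟪x - c • u, u⟫ = ⟪x, u⟫ - c := by
    rw [inner_sub_left, inner_smul_left, huu]; simp
  have hyi (c : ℝ) : ⟪y - c • u, u⟫ = ⟪y, u⟫ - c := by
    rw [inner_sub_left, inner_smul_left, huu]; simp
  have e0 := sinePair_sq_split hu x y
  have e1 := sinePair_sq_split hu (x - a • u) (y - b • u)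
  have e2 := sinePair_sq_split hu (x - (2 * a) • u) (y - (2 * b) • u)
  rw [hx, hy, hxi, hyi] at e1 e2
  rw [← hx', ← hy'] at e0
  have hmid : (⟪x, u⟫ - a) • y' - (⟪y, u⟫ - b) • x' =
      (1 / 2 : ℝ) • ((⟪x, u⟫ • y' - ⟪y, u⟫ • x') +
        ((⟪x, u⟫ - 2 * a) • y' - (⟪y, u⟫ - 2 * b) • x')) := by
    module
  rw [hmid] at e1
  obtain ⟨hle, hlt⟩ := sqrt_mid_le (sinePair_nonneg _ _) (sinePair_nonneg _ _)
    e0 e2 e1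
  have hconv : ((sinePair x y + sinePair (x - (2 * a) • u) (y - (2 * b) • u)) / 2) ^ p ≤
      (sinePair x y ^ p + sinePair (x - (2 * a) • u) (y - (2 * b) • u) ^ p) / 2 := by
    have := (convexOn_rpow hp).2 (sinePair_nonneg x y)
      (sinePair_nonneg (x - (2 * a) • u) (y - (2 * b) • u))
      (show (0 : ℝ) ≤ 1 / 2 by norm_num) (show (0 : ℝ) ≤ 1 / 2 by norm_num) (by norm_num)
    simp only [smul_eq_mul] at this
    rw [add_div, div_eq_inv_mul, div_eq_inv_mul, ← one_div]
    linarith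
  refine ⟨(Real.rpow_le_rpow (sinePair_nonneg _ _) hle (by linarith)).trans hconv, ?_⟩
  intro hA hab
  refine (Real.rpow_lt_rpow (sinePair_nonneg _ _) (hlt hA ?_) (by linarith)).trans_le hconv
  -- equality of the endpoints would be a linear relation `a y' = b x'`
  intro heq
  have hrel : a • y' = b • x' := by
    have : (2 : ℝ) • (a • y' - b • x') = 0 := by
      have h0 := sub_eq_zero.2 heq
      rw [← h0]; module
    exact sub_eq_zero.1 ((smul_eq_zero.1 this).resolve_left (by norm_num))
  apply hA
  rcases hab with ha | hb
  · have : y' = (a⁻¹ * b) • x' := by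
      rw [mul_smul, ← hrel, smul_smul, inv_mul_cancel₀ ha, one_smul]
    rw [this, sinePair_smul_right]
    rw [sinePair_self, mul_zero]
  · have : x' = (b⁻¹ * a) • y' := by
      rw [mul_smul, hrel, smul_smul, inv_mul_cancel₀ hb, one_smul]
    rw [this, sinePair_smul]
    rw [sinePair_self, mul_zero]

end SinePair

/-! ### Homogeneous functions and their sublevel sets -/

/-- A continuous function that is positive off the origin and positively homogeneous of
degree `p`. -/
structure IsHomog {n : ℕ} (p : ℝ) (g : EuclideanSpace ℝ (Fin n) → ℝ) : Prop where
  cont : Continuous g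
  hom : ∀ (t : ℝ) (x), 0 ≤ t → g (t • x) = t ^ p * g x
  pos : ∀ x, x ≠ 0 → 0 < g x

/-- The sets whose volumes are compared: bounded, measurable, of positive volume. -/
structure IsGood {n : ℕ} (K : Set (EuclideanSpace ℝ (Fin n))) : Prop where
  meas : MeasurableSet K
  bdd : Bornology.IsBounded K
  ne_zero : volume K ≠ 0

section Homog

variable {n : ℕ}

local notation "E" => EuclideanSpace ℝ (Fin n)

lemma IsGood.ne_top {K : Set E} (hK : IsGood K) : volume K ≠ ∞ := hK.bdd.measure_lt_top.ne

lemma IsGood.real_pos {K : Set E} (hK : IsGood K) : 0 < volume.real K :=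
  ENNReal.toReal_pos hK.ne_zero hK.ne_top

lemma IsGood.integrableOn {K : Set E} (hK : IsGood K) {g : E → ℝ} (hg : Continuous g) :
    IntegrableOn g K := by
  obtain ⟨R, hR⟩ := hK.bdd.subset_closedBall 0
  exact (hg.continuousOn.integrableOn_compact (isCompact_closedBall 0 R)).mono_set hR

lemma IsGood.smul {K : Set E} (hK : IsGood K) {t : ℝ} (ht : 0 < t) : IsGood (t • K) where
  meas := hK.meas.const_smul_of_ne_zero ht.ne'
  bdd := hK.bdd.smul₀ t
  ne_zero := by
    rw [Measure.addHaar_smul]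
    refine mul_ne_zero ?_ hK.ne_zero
    rw [Ne, ENNReal.ofReal_eq_zero, not_le]
    positivity

lemma volume_real_smul {K : Set E} {t : ℝ} (ht : 0 ≤ t) :
    volume.real (t • K) = t ^ n * volume.real K := by
  rw [measureReal_def, Measure.addHaar_smul, ENNReal.toReal_mul, ENNReal.toReal_ofReal (abs_nonneg _),
    finrank_euclideanSpace_fin, abs_of_nonneg (by positivity), measureReal_def]

variable {p : ℝ} {g : EuclideanSpace ℝ (Fin n) → ℝ}

lemma IsHomog.zero (hg : IsHomog p g) (hp : 0 < p) : g 0 = 0 := by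
  have := hg.hom 0 0 le_rfl
  simpa [Real.zero_rpow hp.ne'] using this

lemma IsHomog.nonneg (hg : IsHomog p g) (hp : 0 < p) (x : E) : 0 ≤ g x := by
  by_cases hx : x = 0
  · rw [hx, hg.zero hp]
  · exact (hg.pos x hx).le

lemma IsHomog.exists_lower (hg : IsHomog p g) (hp : 0 < p) (hn : 0 < n) :
    ∃ m > 0, ∀ x, m * ‖x‖ ^ p ≤ g x := by
  have : Nonempty (Fin n) := ⟨⟨0, hn⟩⟩
  obtain ⟨x0, hx0, hmin⟩ := (isCompact_sphere (0 : E) 1).exists_isMinOn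
    (NormedSpace.sphere_nonempty.2 zero_le_one) hg.cont.continuousOn
  have hx0' : x0 ≠ 0 := by
    rintro rfl
    simp at hx0
  refine ⟨g x0, hg.pos _ hx0', fun x => ?_⟩
  by_cases hx : x = 0
  · simp [hx, Real.zero_rpow hp.ne', hg.zero hp]
  have hxn : 0 < ‖x‖ := norm_pos_iff.2 hx
  have h1 : g x0 ≤ g (‖x‖⁻¹ • x) := hmin (by simp [norm_smul, hxn.ne'])
  have h2 := hg.hom ‖x‖ (‖x‖⁻¹ • x) hxn.le
  rw [smul_smul, mul_inv_cancel₀ hxn.ne', one_smul] at h2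
  rw [h2, mul_comm]
  gcongr

lemma IsHomog.isGood_sublevel (hg : IsHomog p g) (hp : 0 < p) (hn : 0 < n) {τ : ℝ} (hτ : 0 < τ) :
    IsGood {x | g x ≤ τ} where
  meas := (isClosed_le hg.cont continuous_const).measurableSet
  bdd := by
    obtain ⟨m, hm, hlow⟩ := hg.exists_lower hp hn
    refine isBounded_iff_forall_norm_le.2 ⟨(τ / m) ^ (1 / p), fun x hx => ?_⟩
    have h : ‖x‖ ^ p ≤ τ / m := by
      rw [le_div_iff₀ hm, mul_comm]
      exact (hlow x).trans hx
    calc ‖x‖ = (‖x‖ ^ p) ^ (1 / p) := by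
          rw [← Real.rpow_mul (norm_nonneg _), mul_one_div_cancel hp.ne', Real.rpow_one]
      _ ≤ _ := by gcongr
  ne_zero := by
    have ho : IsOpen {x | g x < τ} := isOpen_lt hg.cont continuous_const
    have hne : ({x | g x < τ}).Nonempty := ⟨0, by simpa [hg.zero hp] using hτ⟩
    exact (lt_of_lt_of_le (ho.measure_pos volume hne) (measure_mono fun x (hx : g x < τ) => hx.le)).ne'

lemma IsHomog.sublevel_eq (hg : IsHomog p g) (hp : 0 < p) {σ τ : ℝ} (hσ : 0 < σ) (hτ : 0 < τ) :
    {x | g x ≤ τ} = (τ / σ) ^ (1 / p) • {x | g x ≤ σ} := by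
  have hd : 0 < τ / σ := by positivity
  have ht : 0 < (τ / σ) ^ (1 / p) := by positivity
  ext x
  rw [Set.mem_smul_set_iff_inv_smul_mem₀ ht.ne', mem_ofPred_eq, mem_ofPred_eq,
    hg.hom _ _ (inv_nonneg.2 ht.le), Real.inv_rpow ht.le, ← Real.rpow_mul hd.le,
    one_div_mul_cancel hp.ne', Real.rpow_one, inv_div, div_mul_eq_mul_div, div_le_iff₀ hτ,
    mul_le_mul_iff_right₀ hσ]

lemma IsHomog.volume_sublevel (hg : IsHomog p g) (hp : 0 < p) {σ τ : ℝ} (hσ : 0 < σ)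
    (hτ : 0 < τ) :
    volume.real {x | g x ≤ τ} = (τ / σ) ^ ((n : ℝ) / p) * volume.real {x | g x ≤ σ} := by
  have hd : 0 < τ / σ := by positivity
  rw [hg.sublevel_eq hp hσ hτ, volume_real_smul (by positivity), ← Real.rpow_natCast,
    ← Real.rpow_mul hd.le]
  congr 2
  ring

/-- The mean of a `p`-homogeneous function over its sublevel set of height `τ` is
`n / (n + p) * τ`, because the distribution function is a pure power. -/
lemma IsHomog.integral_sublevel (hg : IsHomog p g) (hp : 0 < p) (hn : 0 < n) {τ : ℝ}
    (hτ : 0 < τ) :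
    ∫ x in {x | g x ≤ τ}, g x = n / (n + p) * τ * volume.real {x | g x ≤ τ} := by
  set C := {x | g x ≤ τ} with hC
  have hgood : IsGood C := hg.isGood_sublevel hp hn hτ
  set V := volume.real C with hV
  have hn' : (0 : ℝ) < n := by exact_mod_cast hn
  have hint := hgood.integrableOn hg.cont
  rw [hint.integral_eq_integral_meas_lt (Filter.Eventually.of_forall (hg.nonneg hp))]
  have hmeas (t : ℝ) (ht : 0 < t) : (volume.restrict C).real {a | t < g a} =
      (Ioc 0 τ).indicator (fun t => V - (t / τ) ^ ((n : ℝ) / p) * V) t := by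
    rw [measureReal_restrict_apply (isOpen_lt continuous_const hg.cont).measurableSet]
    by_cases htτ : t ≤ τ
    · rw [indicator_of_mem (show t ∈ Ioc 0 τ from ⟨ht, htτ⟩)]
      have hsub : {x | g x ≤ t} ⊆ C := fun x hx => le_trans hx htτ
      have : {a | t < g a} ∩ C = C \ {x | g x ≤ t} := by
        ext x; simp [and_comm]
      rw [this, measureReal_sdiff hsub (isClosed_le hg.cont continuous_const).measurableSet
        hgood.ne_top, hg.volume_sublevel hp hτ ht]
    · rw [indicator_of_notMem (fun h => htτ h.2)]
      have : {a | t < g a} ∩ C = ∅ := by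
        ext x
        simp only [mem_inter_iff, mem_ofPred_eq, mem_empty_iff_false, iff_false, hC, not_and, not_le]
        intro h
        exact (not_le.1 htτ).trans h
      rw [this, measureReal_empty]
  rw [setIntegral_congr_fun measurableSet_Ioi (fun t ht => hmeas t ht),
    setIntegral_indicator measurableSet_Ioc]
  have hI : Ioi (0 : ℝ) ∩ Ioc 0 τ = Ioc 0 τ := by
    ext t; simp +contextual
  rw [hI, ← intervalIntegral.integral_of_le hτ.le]
  have hpow : IntervalIntegrable (fun t : ℝ => (t / τ) ^ ((n : ℝ) / p) * V) volume 0 τ := by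
    apply Continuous.intervalIntegrable
    exact ((continuous_id.div_const τ).rpow_const (fun _ => Or.inr (by positivity))).mul_const V
  rw [intervalIntegral.integral_sub (by simp) hpow, intervalIntegral.integral_mul_const,
    intervalIntegral.integral_comp_div (fun t : ℝ => t ^ ((n : ℝ) / p)) hτ.ne',
    integral_rpow (Or.inl (by have : 0 < (n : ℝ) / p := by positivity
                              linarith))]
  simp only [intervalIntegral.integral_const, smul_eq_mul, sub_zero, zero_div, div_self hτ.ne',
    Real.one_rpow]
  rw [Real.zero_rpow (by positivity)]
  field_simp
  ring

/-- Bathtub principle: among good sets of a given volume, the integral of `g` is smallest on the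
sublevel set of `g`, and only there (up to null sets). -/
lemma bathtub (hg : Continuous g) {τ : ℝ} {K : Set E} (hK : IsGood K)
    (hC : IsGood {x | g x ≤ τ}) (hvol : volume.real K = volume.real {x | g x ≤ τ}) :
    ∫ x in {x | g x ≤ τ}, g x ≤ ∫ x in K, g x ∧
    (∫ x in {x | g x ≤ τ}, g x = ∫ x in K, g x → K =ᵐ[volume] {x | g x ≤ τ}) := by
  set C := {x | g x ≤ τ} with hCdef
  have hs : Continuous (fun x => g x - τ) := hg.sub continuous_const
  have h1 : ∫ x in K, (g x - τ) = (∫ x in K ∩ C, (g x - τ)) + ∫ x in K \ C, (g x - τ) :=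
    (integral_inter_add_sdiff hC.meas (hK.integrableOn hs)).symm
  have h2 : ∫ x in C, (g x - τ) = (∫ x in C ∩ K, (g x - τ)) + ∫ x in C \ K, (g x - τ) :=
    (integral_inter_add_sdiff hK.meas (hC.integrableOn hs)).symm
  have h3 : ∫ x in K, (g x - τ) = (∫ x in K, g x) - τ * volume.real K := by
    rw [integral_sub (hK.integrableOn hg) (integrableOn_const hK.ne_top)]
    simp [mul_comm]
  have h4 : ∫ x in C, (g x - τ) = (∫ x in C, g x) - τ * volume.real C := by
    rw [integral_sub (hC.integrableOn hg) (integrableOn_const hC.ne_top)]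
    simp [mul_comm]
  have h5 : 0 ≤ ∫ x in K \ C, (g x - τ) :=
    setIntegral_nonneg (hK.meas.diff hC.meas) fun x hx => by
      have := hx.2
      simp only [hCdef, mem_ofPred_eq, not_le] at this
      linarith
  have h6 : ∫ x in C \ K, (g x - τ) ≤ 0 :=
    setIntegral_nonpos (hC.meas.diff hK.meas) fun x hx => by
      have := hx.1
      simp only [hCdef, mem_ofPred_eq] at this
      linarith
  rw [inter_comm] at h2
  refine ⟨by rw [hvol] at h3; linarith, fun heq => ?_⟩
  have h7 : ∫ x in K \ C, (g x - τ) = 0 := by rw [hvol] at h3; linarith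
  have hnull : volume (K \ C) = 0 := by
    have h8 := (setIntegral_eq_zero_iff_of_nonneg_ae (μ := volume) (s := K \ C)
      (f := fun x => g x - τ) (by
        refine (ae_restrict_iff' (hK.meas.diff hC.meas)).2 (Filter.Eventually.of_forall ?_)
        intro x hx
        have := hx.2
        simp only [hCdef, mem_ofPred_eq, not_le] at this
        simp only [Pi.zero_apply]
        linarith) ((hK.integrableOn hs).mono_set sdiff_subset)).1 h7
    rw [Filter.EventuallyEq, ae_restrict_iff' (hK.meas.diff hC.meas)] at h8
    refine measure_mono_null (fun x hx => ?_) h8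
    simp only [mem_compl_iff, mem_ofPred_eq, Pi.zero_apply]
    intro h
    have h9 := h hx
    have := hx.2
    simp only [hCdef, mem_ofPred_eq, not_le] at this
    linarith
  have hKC : K ≤ᵐ[volume] C := by
    rw [ae_le_set]; exact hnull
  refine ae_eq_of_ae_subset_of_measure_ge hKC ?_ hK.meas.nullMeasurableSet hC.ne_top
  rw [measureReal_def, measureReal_def, ENNReal.toReal_eq_toReal_iff' hK.ne_top hC.ne_top] at hvol
  exact hvol.ge

end Homog

/-! ### Sine moments, the energy of a pair, and the volume product -/

/-- The function `x ↦ ∫_K [x, y]^p dy`, whose sublevel sets are the dilates of `Λ_p°K`. -/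
def sineMoment {n : ℕ} (p : ℝ) (K : Set (EuclideanSpace ℝ (Fin n)))
    (x : EuclideanSpace ℝ (Fin n)) : ℝ :=
  ∫ y in K, sinePair x y ^ p

/-- The volume product `V(K) V(Λ_p°K)`, as a real number. -/
def volProd (n : ℕ) (p : ℝ) (K : Set (EuclideanSpace ℝ (Fin n))) : ℝ :=
  volume.real K * volume.real (sineCentroidPolar n p K)

/-- Origin-symmetric convex bodies. -/
structure IsBody {n : ℕ} (K : Set (EuclideanSpace ℝ (Fin n))) : Prop where
  compact : IsCompact K
  convex : Convex ℝ K
  symm : ∀ x ∈ K, -x ∈ K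
  int : (interior K).Nonempty

section Moment

variable {n : ℕ} {p : ℝ} {K L : Set (EuclideanSpace ℝ (Fin n))}

local notation "E" => EuclideanSpace ℝ (Fin n)

lemma IsBody.isGood (hK : IsBody K) : IsGood K where
  meas := hK.compact.measurableSet
  bdd := hK.compact.isBounded
  ne_zero := (Measure.measure_pos_of_nonempty_interior _ hK.int).ne'

lemma omegaVol_pos {q : ℝ} (hq : -2 < q) : 0 < omegaVol q := by
  unfold omegaVol
  have := Real.Gamma_pos_of_pos (show 0 < 1 + q / 2 by linarith)
  positivity

lemma tildeC_pos (hn : 2 ≤ n) (hp : 0 < p) : 0 < tildeC n p := by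
  have hn' : (2 : ℝ) ≤ n := by exact_mod_cast hn
  unfold tildeC
  have h1 := omegaVol_pos (show -2 < (n : ℝ) - 1 by linarith)
  have h2 := omegaVol_pos (show -2 < (n : ℝ) + p - 2 by linarith)
  have h3 := omegaVol_pos (show -2 < (n : ℝ) by linarith)
  have h4 := omegaVol_pos (show -2 < (n : ℝ) + p - 3 by linarith)
  have h5 : 0 < (n : ℝ) - 1 := by linarith
  positivity

lemma continuous_sinePair_right (hp : 0 ≤ p) (x : E) :
    Continuous (fun y : E => sinePair x y ^ p) := by
  unfold sinePair
  exact Continuous.rpow_const (by fun_prop) (fun _ => Or.inr hp)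

lemma integrableOn_sinePair (hK : IsGood K) (hp : 0 ≤ p) (x : E) :
    IntegrableOn (fun y => sinePair x y ^ p) K := by
  have h := continuous_sinePair_right hp x
  exact hK.integrableOn h

lemma continuous_sineMoment (hK : IsGood K) (hp : 0 ≤ p) : Continuous (sineMoment p K) := by
  obtain ⟨R, hR⟩ := hK.bdd.subset_closedBall 0
  have h := continuous_parametric_integral_of_continuous (μ := volume.restrict K)
    (f := fun x y : E => sinePair x y ^ p) (continuous_sinePair_rpow hp)
    (isCompact_closedBall (0 : E) R)
  rw [Measure.restrict_restrict isClosed_closedBall.measurableSet,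
    inter_eq_self_of_subset_right hR] at h
  exact h

lemma sineMoment_smul (hp : 0 ≤ p) (t : ℝ) (x : E) :
    sineMoment p K (t • x) = |t| ^ p * sineMoment p K x := by
  unfold sineMoment
  simp_rw [sinePair_smul, Real.mul_rpow (abs_nonneg t) (sinePair_nonneg _ _)]
  rw [integral_const_mul]

lemma sineMoment_nonneg (x : E) : 0 ≤ sineMoment p K x :=
  integral_nonneg fun _ => Real.rpow_nonneg (sinePair_nonneg _ _) _

lemma volume_span_singleton (hn : 2 ≤ n) (x : E) :
    volume (Submodule.span ℝ {x} : Set E) = 0 := by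
  apply Measure.addHaar_submodule
  intro h
  have h1 : Module.finrank ℝ (Submodule.span ℝ {x}) ≤ 1 := by
    simpa using finrank_span_le_card (R := ℝ) ({x} : Set E)
  rw [h, finrank_top, finrank_euclideanSpace_fin] at h1
  omega

lemma isHomog_sineMoment (hn : 2 ≤ n) (hp : 0 < p) (hK : IsGood K) :
    IsHomog p (sineMoment p K) where
  cont := continuous_sineMoment hK hp.le
  hom t x ht := by rw [sineMoment_smul hp.le, abs_of_nonneg ht]
  pos x hx := by
    refine lt_of_le_of_ne (sineMoment_nonneg x) (fun h => hK.ne_zero ?_)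
    have h0 := (setIntegral_eq_zero_iff_of_nonneg_ae
      (Filter.Eventually.of_forall fun y => Real.rpow_nonneg (sinePair_nonneg x y) p)
      (integrableOn_sinePair hK hp.le x)).1 h.symm
    rw [Filter.EventuallyEq, ae_restrict_iff' hK.meas] at h0
    have hspan : ∀ᵐ y : E, y ∉ (Submodule.span ℝ {x} : Set E) :=
      measure_eq_zero_iff_ae_notMem.1 (volume_span_singleton hn x)
    rw [measure_eq_zero_iff_ae_notMem]
    filter_upwards [h0, hspan] with y hy hys hyK
    exact (Real.rpow_pos_of_pos (sinePair_pos_of_not_mem_span hx hys) p).ne' (hy hyK)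

lemma convexOn_sineMoment (hp : 1 ≤ p) (hK : IsGood K) :
    ConvexOn ℝ univ (sineMoment p K) := by
  refine ⟨convex_univ, fun x _ x' _ a b ha hb hab => ?_⟩
  simp only [smul_eq_mul]
  unfold sineMoment
  have hp0 : 0 ≤ p := by linarith
  rw [← integral_const_mul, ← integral_const_mul,
    ← integral_add ((integrableOn_sinePair hK hp0 x).const_mul a)
      ((integrableOn_sinePair hK hp0 x').const_mul b)]
  refine integral_mono (integrableOn_sinePair hK hp0 _)
    (((integrableOn_sinePair hK hp0 x).const_mul a).add
      ((integrableOn_sinePair hK hp0 x').const_mul b)) (fun y => ?_)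
  calc sinePair (a • x + b • x') y ^ p ≤ (a * sinePair x y + b * sinePair x' y) ^ p := by
        refine Real.rpow_le_rpow (sinePair_nonneg _ _) ?_ hp0
        refine (sinePair_add_le _ _ _).trans (le_of_eq ?_)
        rw [sinePair_smul, sinePair_smul, abs_of_nonneg ha, abs_of_nonneg hb]
    _ ≤ _ := (convexOn_rpow hp).2 (sinePair_nonneg x y) (sinePair_nonneg x' y) ha hb hab

/-- The energy `∫_L ∫_K [x, y]^p dy dx` is symmetric in the two sets. -/
lemma energy_comm (hp : 0 ≤ p) (hK : IsGood K) (hL : IsGood L) :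
    ∫ x in L, sineMoment p K x = ∫ y in K, sineMoment p L y := by
  unfold sineMoment
  rw [integral_integral_swap]
  · simp_rw [sinePair_comm]
  · obtain ⟨R, hR⟩ := hK.bdd.subset_closedBall 0
    obtain ⟨R', hR'⟩ := hL.bdd.subset_closedBall 0
    rw [Measure.prod_restrict]
    have hc : IsCompact (closedBall (0 : E) R' ×ˢ closedBall (0 : E) R) :=
      (isCompact_closedBall _ _).prod (isCompact_closedBall _ _)
    exact ((continuous_sinePair_rpow hp).continuousOn.integrableOn_compact hc).mono_set
      (prod_mono hR' hR)

lemma mem_polar {x : E} : x ∈ sineCentroidPolar n p K ↔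
    sineMoment p K x ≤ tildeC n p * volume.real K := Iff.rfl

lemma polar_eq : sineCentroidPolar n p K =
    {x | sineMoment p K x ≤ tildeC n p * volume.real K} := rfl

lemma isBody_polar (hn : 2 ≤ n) (hp : 1 ≤ p) (hK : IsGood K) :
    IsBody (sineCentroidPolar n p K) := by
  have hp0 : 0 < p := by linarith
  have hτ : 0 < tildeC n p * volume.real K := mul_pos (tildeC_pos hn hp0) hK.real_pos
  have hh := isHomog_sineMoment hn hp0 hK
  have hgood := hh.isGood_sublevel hp0 (by omega) hτ
  refine ⟨?_, ?_, ?_, ?_⟩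
  · exact Metric.isCompact_of_isClosed_isBounded (isClosed_le hh.cont continuous_const) hgood.bdd
  · have := (convexOn_sineMoment hp hK).convex_le (tildeC n p * volume.real K)
    simpa [polar_eq] using this
  · intro x hx
    rw [mem_polar] at hx ⊢
    have := sineMoment_smul (K := K) hp0.le (-1) x
    simp only [neg_smul, one_smul, abs_neg, abs_one, Real.one_rpow, one_mul] at this
    rwa [this]
  · refine ⟨0, mem_interior.2 ⟨{x | sineMoment p K x < tildeC n p * volume.real K},
      fun x (hx : sineMoment p K x < _) => mem_polar.2 hx.le, isOpen_lt hh.cont continuous_const, ?_⟩⟩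
    show sineMoment p K 0 < _
    rw [hh.zero hp0]
    exact hτ

/-- The energy of the pair `(K, Λ_p°K)` is a fixed multiple of the volume product. -/
lemma energy_polar (hn : 2 ≤ n) (hp : 0 < p) (hK : IsGood K) :
    ∫ x in sineCentroidPolar n p K, sineMoment p K x =
      n / (n + p) * tildeC n p * volProd n p K := by
  have hτ : 0 < tildeC n p * volume.real K := mul_pos (tildeC_pos hn hp) hK.real_pos
  rw [polar_eq, (isHomog_sineMoment hn hp hK).integral_sublevel hp (by omega) hτ, volProd, polar_eq]
  ring

/-- Lower bound for the energy of a pair `(K, L)` in terms of `Λ_p°K`; equality forces `L` to be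
a dilate of `Λ_p°K` up to a null set. -/
lemma energy_ge (hn : 2 ≤ n) (hp : 1 ≤ p) (hK : IsGood K) (hL : IsGood L) :
    n / (n + p) * tildeC n p * (volume.real K * volume.real L) *
        (volume.real L / volume.real (sineCentroidPolar n p K)) ^ (p / n) ≤
      ∫ x in L, sineMoment p K x ∧
    (n / (n + p) * tildeC n p * (volume.real K * volume.real L) *
        (volume.real L / volume.real (sineCentroidPolar n p K)) ^ (p / n) =
      ∫ x in L, sineMoment p K x →
      ∃ τ > 0, L =ᵐ[volume] {x | sineMoment p K x ≤ τ}) := by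
  have hp0 : 0 < p := by linarith
  have hn0 : (0 : ℝ) < n := by exact_mod_cast (by omega : 0 < n)
  have hσ : 0 < tildeC n p * volume.real K := mul_pos (tildeC_pos hn hp0) hK.real_pos
  have hh := isHomog_sineMoment hn hp0 hK
  have hP := (isBody_polar hn hp hK).isGood.real_pos
  have hW := hL.real_pos
  have hq : 0 < volume.real L / volume.real (sineCentroidPolar n p K) := div_pos hW hP
  set q := volume.real L / volume.real (sineCentroidPolar n p K) with hqdef
  set τ := tildeC n p * volume.real K * q ^ (p / n) with hτdef
  have hτ : 0 < τ := by positivity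
  have hvol : volume.real L = volume.real {x | sineMoment p K x ≤ τ} := by
    rw [hh.volume_sublevel hp0 hσ hτ, ← polar_eq, hτdef, mul_div_cancel_left₀ _ hσ.ne',
      ← Real.rpow_mul hq.le, div_mul_div_cancel₀ hn0.ne', div_self hp0.ne', Real.rpow_one, hqdef,
      div_mul_cancel₀ _ hP.ne']
  have hint := hh.integral_sublevel hp0 (by omega) hτ
  rw [← hvol] at hint
  have hval : n / (n + p) * tildeC n p * (volume.real K * volume.real L) * q ^ (p / n) =
      ∫ x in {x | sineMoment p K x ≤ τ}, sineMoment p K x := by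
    rw [hint, hτdef]; ring
  rw [hval]
  obtain ⟨h1, h2⟩ := bathtub hh.cont hL (hh.isGood_sublevel hp0 (by omega) hτ) hvol
  exact ⟨h1, fun h => ⟨τ, hτ, h2 h⟩⟩

lemma volProd_pos (hn : 2 ≤ n) (hp : 1 ≤ p) (hK : IsGood K) : 0 < volProd n p K :=
  mul_pos hK.real_pos (isBody_polar hn hp hK).isGood.real_pos

/-- Passing from `K` to the convex body `Λ_p°K` does not decrease the volume product. -/
lemma volProd_le_polar (hn : 2 ≤ n) (hp : 1 ≤ p) (hK : IsGood K) :
    volProd n p K ≤ volProd n p (sineCentroidPolar n p K) ∧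
    (volProd n p K = volProd n p (sineCentroidPolar n p K) →
      ∃ τ > 0, K =ᵐ[volume] {x | sineMoment p (sineCentroidPolar n p K) x ≤ τ}) := by
  have hp0 : 0 < p := by linarith
  have hn0 : (0 : ℝ) < n := by exact_mod_cast (by omega : 0 < n)
  set L := sineCentroidPolar n p K with hL
  have hLg : IsGood L := (isBody_polar hn hp hK).isGood
  have hLL : IsGood (sineCentroidPolar n p L) := (isBody_polar hn hp hLg).isGood
  have h1 := energy_polar hn hp0 hK
  rw [← hL, energy_comm hp0.le hK hLg] at h1
  obtain ⟨h2, h3⟩ := energy_ge hn hp hLg hK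
  rw [h1] at h2 h3
  have hc : 0 < n / (n + p) * tildeC n p := mul_pos (by positivity) (tildeC_pos hn hp0)
  have hΦ : 0 < volProd n p K := volProd_pos hn hp hK
  have hΦ' : volume.real L * volume.real K = volProd n p K := by
    rw [volProd, mul_comm]
  rw [hΦ'] at h2 h3
  have hle : volume.real K ≤ volume.real (sineCentroidPolar n p L) := by
    by_contra hcon
    push Not at hcon
    have : 1 < (volume.real K / volume.real (sineCentroidPolar n p L)) ^ (p / n) :=
      Real.one_lt_rpow ((one_lt_div hLL.real_pos).2 hcon) (by positivity)
    have := mul_pos hc hΦ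
    nlinarith
  refine ⟨?_, fun heq => h3 ?_⟩
  · rw [volProd, volProd, mul_comm]
    exact mul_le_mul_of_nonneg_left hle hLg.real_pos.le
  · have : volume.real K = volume.real (sineCentroidPolar n p L) := by
      rw [volProd, volProd, mul_comm] at heq
      exact mul_left_cancel₀ hLg.real_pos.ne' heq
    rw [this, div_self hLL.real_pos.ne', Real.one_rpow, mul_one]

end Moment

/-! ### A Blaschke selection principle -/

section Selection

variable {n : ℕ}

local notation "E" => EuclideanSpace ℝ (Fin n)

/-- Sequential compactness of the nonempty compact subsets of the unit ball for the Hausdorff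
distance. -/
lemma blaschke_selection (K : ℕ → Set E) (hc : ∀ j, IsCompact (K j)) (hne : ∀ j, (K j).Nonempty)
    (hB : ∀ j, K j ⊆ closedBall 0 1) :
    ∃ L : Set E, IsCompact L ∧ L.Nonempty ∧ L ⊆ closedBall 0 1 ∧ ∃ φ : ℕ → ℕ, StrictMono φ ∧
      ∀ ε > 0, ∀ᶠ j in Filter.atTop, (∀ x ∈ K (φ j), ∃ y ∈ L, dist x y < ε) ∧
        (∀ y ∈ L, ∃ x ∈ K (φ j), dist y x < ε) := by
  have : CompactSpace (closedBall (0 : E) 1) := isCompact_iff_compactSpace.1 (isCompact_closedBall _ _)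
  let X : ℕ → TopologicalSpace.NonemptyCompacts (closedBall (0 : E) 1) := fun j =>
    ⟨⟨(Subtype.val : closedBall (0 : E) 1 → E) ⁻¹' (K j),
      ((hc j).isClosed.preimage continuous_subtype_val).isCompact⟩, by
      obtain ⟨x, hx⟩ := hne j
      exact ⟨⟨x, hB j hx⟩, hx⟩⟩
  obtain ⟨Y, -, φ, hφ, hlim⟩ := isCompact_univ.tendsto_subseq (x := X) (fun _ => mem_univ _)
  refine ⟨Subtype.val '' (Y : Set (closedBall (0 : E) 1)),
    Y.isCompact.image continuous_subtype_val, Y.nonempty.image _, by simp, φ, hφ, fun ε hε => ?_⟩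
  filter_upwards [(Metric.tendsto_nhds.1 hlim) ε hε] with j hj
  rw [NonemptyCompacts.dist_eq] at hj
  have hfin : hausdorffEDist ((X (φ j) : Set (closedBall (0 : E) 1))) (Y : Set _) ≠ ⊤ :=
    hausdorffEDist_ne_top_of_nonempty_of_bounded (X (φ j)).nonempty Y.nonempty
      (X (φ j)).isCompact.isBounded Y.isCompact.isBounded
  refine ⟨fun x hx => ?_, ?_⟩
  · obtain ⟨y, hy, h⟩ := exists_dist_lt_of_hausdorffDist_lt (x := (⟨x, hB _ hx⟩ : closedBall (0 : E) 1))
      (show _ ∈ (X (φ j) : Set (closedBall (0 : E) 1)) from hx) hj hfin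
    exact ⟨y, ⟨y, hy, rfl⟩, h⟩
  · rintro _ ⟨y, hy, rfl⟩
    obtain ⟨x, hx, h⟩ := exists_dist_lt_of_hausdorffDist_lt' hy hj hfin
    exact ⟨x, hx, by rw [dist_comm]; exact h⟩

end Selection

section Bounds

variable {n : ℕ} {p : ℝ} {K L : Set (EuclideanSpace ℝ (Fin n))}

local notation "E" => EuclideanSpace ℝ (Fin n)

lemma sineMoment_smul_set (hp : 0 ≤ p) {t : ℝ} (ht : 0 < t) (x : E) :
    sineMoment p (t • K) x = t ^ n * t ^ p * sineMoment p K x := by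
  unfold sineMoment
  have h := Measure.setIntegral_comp_smul_of_pos (volume : Measure E)
    (fun y => sinePair x y ^ p) K ht
  simp_rw [sinePair_smul_right, Real.mul_rpow (abs_nonneg t) (sinePair_nonneg _ _),
    integral_const_mul, abs_of_pos ht, finrank_euclideanSpace_fin, smul_eq_mul] at h
  rw [mul_assoc, h, mul_inv_cancel_left₀ (by positivity)]

lemma sineMoment_mono (hp : 0 ≤ p) (hL : IsGood L) (h : K ⊆ L) (x : E) :
    sineMoment p K x ≤ sineMoment p L x := by
  unfold sineMoment
  exact setIntegral_mono_set (integrableOn_sinePair hL hp x)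
    (Filter.Eventually.of_forall fun y => Real.rpow_nonneg (sinePair_nonneg x y) p)
    h.eventuallyLE

/-- If `K` and `L` are contained in each other up to a dilation by `s`, their volume products agree
up to a factor that tends to `1` with `s`. -/
lemma volProd_le_of_subset_smul (hn : 2 ≤ n) (hp : 1 ≤ p) (hK : IsGood K) (hL : IsGood L) {s : ℝ}
    (hs : 0 < s) (h1 : K ⊆ s • L) (h2 : L ⊆ s • K) :
    volProd n p K ≤ s ^ n * ((s ^ n * s ^ p * s ^ n) ^ (1 / p)) ^ n * volProd n p L := by
  have hp0 : 0 < p := by linarith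
  have hc := tildeC_pos hn hp0
  have hV : volume.real K ≤ s ^ n * volume.real L := by
    rw [← volume_real_smul hs.le]
    exact measureReal_mono h1 (hL.smul hs).ne_top
  set q : ℝ := (s ^ n * s ^ p * s ^ n) ^ (1 / p) with hq
  have hq0 : 0 < q := by positivity
  have hqp : q ^ p = s ^ n * s ^ p * s ^ n := by
    rw [hq, ← Real.rpow_mul (by positivity), one_div_mul_cancel hp0.ne', Real.rpow_one]
  have hsub : sineCentroidPolar n p K ⊆ q • sineCentroidPolar n p L := by
    intro x hx
    rw [Set.mem_smul_set_iff_inv_smul_mem₀ hq0.ne', mem_polar, sineMoment_smul hp0.le,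
      abs_of_pos (inv_pos.2 hq0), Real.inv_rpow hq0.le, hqp, inv_mul_le_iff₀ (by positivity)]
    calc sineMoment p L x ≤ sineMoment p (s • K) x := sineMoment_mono hp0.le (hK.smul hs) h2 x
      _ = s ^ n * s ^ p * sineMoment p K x := sineMoment_smul_set hp0.le hs x
      _ ≤ s ^ n * s ^ p * (tildeC n p * (s ^ n * volume.real L)) := by
          gcongr
          exact (mem_polar.1 hx).trans (by gcongr)
      _ = _ := by ring
  have hW : volume.real (sineCentroidPolar n p K) ≤ q ^ n * volume.real (sineCentroidPolar n p L) := by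
    rw [← volume_real_smul hq0.le]
    exact measureReal_mono hsub ((isBody_polar hn hp hL).isGood.smul hq0).ne_top
  rw [volProd, volProd]
  calc _ ≤ (s ^ n * volume.real L) * (q ^ n * volume.real (sineCentroidPolar n p L)) := by
        gcongr
    _ = _ := by ring

lemma polar_smul (hp : 1 ≤ p) {t : ℝ} (ht : 0 < t) :
    sineCentroidPolar n p (t • K) = t⁻¹ • sineCentroidPolar n p K := by
  have hp0 : 0 < p := by linarith
  ext x
  rw [Set.mem_smul_set_iff_inv_smul_mem₀ (inv_pos.2 ht).ne', inv_inv, mem_polar, mem_polar,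
    sineMoment_smul hp0.le, sineMoment_smul_set hp0.le ht, volume_real_smul ht.le, abs_of_pos ht,
    mul_left_comm (tildeC n p), mul_assoc, mul_le_mul_iff_right₀ (by positivity)]

lemma volProd_smul (hp : 1 ≤ p) {t : ℝ} (ht : 0 < t) :
    volProd n p (t • K) = volProd n p K := by
  rw [volProd, volProd, polar_smul hp ht, volume_real_smul ht.le,
    volume_real_smul (inv_pos.2 ht).le, inv_pow]
  field_simp

lemma IsBody.smul (hK : IsBody K) {t : ℝ} (ht : 0 < t) : IsBody (t • K) where
  compact := hK.compact.smul t
  convex := hK.convex.smul t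
  symm := by
    rintro _ ⟨x, hx, rfl⟩
    exact ⟨-x, hK.symm x hx, by simp⟩
  int := by
    rw [interior_smul₀ ht.ne']
    exact hK.int.smul_set

/-- Uniform bound for `[x, z]` with `z ∈ K` and `x ∈ Λ_p°K`. It comes from
`(z ± K) / 2 ⊆ K` and `[x, z] ≤ [x, (z + y) / 2] + [x, (z - y) / 2]`. -/
lemma sinePair_le_of_mem_polar (hn : 2 ≤ n) (hp : 1 ≤ p) (hK : IsBody K) {x z : E}
    (hx : x ∈ sineCentroidPolar n p K) (hz : z ∈ K) :
    (sinePair x z / 2) ^ p ≤ 2 ^ n * tildeC n p := by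
  have hp0 : 0 < p := by linarith
  have hg := hK.isGood
  set G : E → ℝ := K.indicator (fun y => sinePair x y ^ p) with hG
  have hGi : Integrable G :=
    (integrable_indicator_iff hg.meas).2 (integrableOn_sinePair hg hp0.le x)
  have hG0 : ∀ y, 0 ≤ G y := fun y =>
    indicator_nonneg (fun y _ => Real.rpow_nonneg (sinePair_nonneg x y) p) y
  have hGI : ∫ y, G y = sineMoment p K x := integral_indicator hg.meas
  have hhalf : ∀ a ∈ K, ∀ b ∈ K, (1 / 2 : ℝ) • (a + b) ∈ K := by
    intro a ha b hb
    rw [smul_add]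
    exact hK.convex ha hb (by norm_num) (by norm_num) (by norm_num)
  have i0 : Integrable (fun y => G ((1 / 2 : ℝ) • y)) := hGi.comp_smul (by norm_num)
  have i1 : Integrable (fun y => G ((1 / 2 : ℝ) • (z + y))) := i0.comp_add_left z
  have i2 : Integrable (fun y => G ((1 / 2 : ℝ) • (z - y))) := i0.comp_sub_left z
  have e0 : ∫ y, G ((1 / 2 : ℝ) • y) = 2 ^ n * sineMoment p K x := by
    rw [Measure.integral_comp_smul, hGI, finrank_euclideanSpace_fin, smul_eq_mul,
      abs_of_pos (by positivity)]
    simp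
  have e1 : ∫ y, G ((1 / 2 : ℝ) • (z + y)) = 2 ^ n * sineMoment p K x := by
    rw [← e0]
    exact integral_add_left_eq_self (fun y => G ((1 / 2 : ℝ) • y)) z
  have e2 : ∫ y, G ((1 / 2 : ℝ) • (z - y)) = 2 ^ n * sineMoment p K x := by
    rw [← e0]
    exact integral_sub_left_eq_self (fun y => G ((1 / 2 : ℝ) • y)) volume z
  have hle : ∫ y in K, 2 * (sinePair x z / 2) ^ p ≤
      ∫ y, (G ((1 / 2 : ℝ) • (z + y)) + G ((1 / 2 : ℝ) • (z - y))) := by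
    refine le_trans ?_ (setIntegral_le_integral (i1.add i2)
      (Filter.Eventually.of_forall fun y => add_nonneg (hG0 _) (hG0 _)) (s := K))
    refine setIntegral_mono_on (integrableOn_const hg.ne_top) (i1.add i2).integrableOn hg.meas
      (fun y hy => ?_)
    have m1 := hhalf z hz y hy
    have m2 := hhalf z hz (-y) (hK.symm y hy)
    rw [← sub_eq_add_neg] at m2
    simp only [hG, indicator_of_mem m1, indicator_of_mem m2]
    set a := sinePair x ((1 / 2 : ℝ) • (z + y))
    set b := sinePair x ((1 / 2 : ℝ) • (z - y))
    have hab : sinePair x z ≤ a + b := by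
      refine le_trans (le_of_eq ?_) (sinePair_add_right_le _ _ _)
      congr 1
      module
    have hcv := (convexOn_rpow hp).2 (show a ∈ Ici 0 from sinePair_nonneg _ _)
      (show b ∈ Ici 0 from sinePair_nonneg _ _) (show (0 : ℝ) ≤ 1 / 2 by norm_num)
      (show (0 : ℝ) ≤ 1 / 2 by norm_num) (by norm_num)
    simp only [smul_eq_mul] at hcv
    have hm : (sinePair x z / 2) ^ p ≤ (1 / 2 * a + 1 / 2 * b) ^ p :=
      Real.rpow_le_rpow (by have := sinePair_nonneg x z; positivity) (by linarith) hp0.le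
    linarith
  rw [setIntegral_const, integral_add i1 i2, e1, e2, smul_eq_mul] at hle
  have hx' := mem_polar.1 hx
  have hV := hg.real_pos
  have h3 : volume.real K * (2 * (sinePair x z / 2) ^ p) ≤
      volume.real K * (2 * (2 ^ n * tildeC n p)) := by
    have : (2:ℝ) ^ n * sineMoment p K x ≤ 2 ^ n * (tildeC n p * volume.real K) := by gcongr
    nlinarith
  have := le_of_mul_le_mul_left h3 hV
  linarith

end Bounds

/-! ### A priori bounds for normalised bodies -/

section Box

variable {n : ℕ} {p : ℝ} {K : Set (EuclideanSpace ℝ (Fin n))}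

local notation "E" => EuclideanSpace ℝ (Fin n)

lemma sinePair_unit {e : E} (he : ‖e‖ = 1) (x : E) : sinePair e x = ‖x - ⟪x, e⟫ • e‖ := by
  rw [sinePair_comm, sinePair_eq_norm, he, one_smul, div_one, real_inner_comm]

/-- An orthonormal basis with a prescribed first vector. -/
lemma exists_basis (hn : 0 < n) {e : E} (he : ‖e‖ = 1) :
    ∃ (b : OrthonormalBasis (Fin n) ℝ E), b ⟨0, hn⟩ = e := by
  have h : Orthonormal ℝ (({(⟨0, hn⟩ : Fin n)} : Set (Fin n)).domRestrict (fun _ : Fin n => e)) := by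
    constructor
    · intro i; exact he
    · intro i j hij
      exact absurd (Subsingleton.elim i j) hij
  obtain ⟨b, hb⟩ := h.exists_orthonormalBasis_extension_of_card_eq (by simp)
  exact ⟨b, hb _ (mem_singleton _)⟩

/-- A box containing the cylinder `{|⟪x, e⟫| ≤ A, [e, x] ≤ B}` bounds its volume. -/
lemma volume_cylinder_le (hn : 0 < n) {e : E} (he : ‖e‖ = 1) {A B : ℝ} (hA : 0 ≤ A) (hB : 0 ≤ B)
    {K : Set E} (hK : ∀ x ∈ K, |⟪x, e⟫| ≤ A ∧ sinePair e x ≤ B) :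
    volume.real K ≤ 2 * A * (2 * B) ^ (n - 1) := by
  obtain ⟨b, hb⟩ := exists_basis hn he
  set i0 : Fin n := ⟨0, hn⟩
  let c : Fin n → ℝ := fun i => if i = i0 then A else B
  let f : E → (Fin n → ℝ) := fun x => (b.repr x).ofLp
  have hf : MeasurePreserving f volume volume :=
    (EuclideanSpace.volume_preserving_symm_measurableEquiv_toLp (Fin n)).comp
      b.measurePreserving_repr
  have hsub : K ⊆ f ⁻¹' (Icc (-c) c) := by
    intro x hx
    obtain ⟨h1, h2⟩ := hK x hx
    have key : ∀ i, |f x i| ≤ c i := by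
      intro i
      have hfi : f x i = ⟪b i, x⟫ := b.repr_apply_apply x i
      rw [hfi]
      by_cases hi : i = i0
      · simp only [c, hi, if_true, hb]
        rwa [real_inner_comm]
      · simp only [c, if_neg hi]
        have h3 : ⟪b i, x⟫ = ⟪b i, x - ⟪x, e⟫ • e⟫ := by
          rw [inner_sub_right, inner_smul_right, ← hb, b.orthonormal.2 hi]
          simp
        rw [h3]
        refine (abs_real_inner_le_norm _ _).trans ?_
        rw [b.orthonormal.1 i, one_mul, ← sinePair_unit he]
        exact h2
    exact ⟨fun i => (abs_le.1 (key i)).1, fun i => (abs_le.1 (key i)).2⟩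
  have hvol : volume (f ⁻¹' (Icc (-c) c)) = volume (Icc (-c) c) :=
    hf.measure_preimage measurableSet_Icc.nullMeasurableSet
  have hle : volume.real K ≤ volume.real (f ⁻¹' (Icc (-c) c)) := by
    refine measureReal_mono hsub ?_
    rw [hvol, Real.volume_Icc_pi]
    exact ENNReal.prod_ne_top (fun i _ => ENNReal.ofReal_ne_top)
  refine hle.trans (le_of_eq ?_)
  have hc0 : ∀ i, 0 ≤ c i := by
    intro i; simp only [c]; split_ifs <;> assumption
  rw [measureReal_def, hvol, Real.volume_Icc_pi_toReal (by intro i; simpa using by linarith [hc0 i])]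
  have : ∀ i, c i - (-c) i = 2 * c i := by intro i; simp; ring
  simp_rw [this]
  rw [← Finset.mul_prod_erase _ _ (Finset.mem_univ i0)]
  rw [Finset.prod_congr rfl (g := fun _ => 2 * B) (by
      intro i hi; simp only [c, if_neg (Finset.ne_of_mem_erase hi)])]
  simp [c]

/-- Symmetric convex bodies in the unit ball whose volume is bounded below contain a ball of
fixed radius. -/
lemma IsBody.closedBall_subset (hn : 0 < n) (hK : IsBody K) (hB : K ⊆ closedBall 0 1) {v : ℝ}
    (hv : v ≤ volume.real K) : ball 0 (v / 2 ^ n) ⊆ K := by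
  intro x hx
  by_contra hxK
  obtain ⟨f, s, hf, hfx⟩ := geometric_hahn_banach_closed_point hK.convex hK.compact.isClosed hxK
  obtain ⟨w, hw⟩ := (InnerProductSpace.toDual ℝ E).surjective f
  have hfw : ∀ a, f a = ⟪w, a⟫ := fun a => by rw [← hw, InnerProductSpace.toDual_apply_apply]
  have h0 : (0 : E) ∈ K := by
    obtain ⟨y, hy⟩ := hK.isGood.real_pos.ne' |> fun h => nonempty_of_measureReal_ne_zero h
    have := hK.convex hy (hK.symm y hy) (show (0:ℝ) ≤ 1 / 2 by norm_num)
      (show (0:ℝ) ≤ 1 / 2 by norm_num) (by norm_num)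
    simpa using this
  have hs : 0 < s := by simpa using hf 0 h0
  have hw0 : 0 < ‖w‖ := by
    rw [norm_pos_iff]
    rintro rfl
    rw [hfw, inner_zero_left] at hfx
    linarith
  have hu : ‖‖w‖⁻¹ • w‖ = 1 := by rw [norm_smul, norm_inv, norm_norm, inv_mul_cancel₀ hw0.ne']
  have hsx : s ≤ ‖w‖ * ‖x‖ := by
    rw [hfw] at hfx
    exact hfx.le.trans (real_inner_le_norm _ _)
  have := volume_cylinder_le hn hu (norm_nonneg x) zero_le_one (K := K) (fun a ha => by
    constructor
    · have h1 := hf a ha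
      have h2 := hf (-a) (hK.symm a ha)
      rw [hfw] at h1
      rw [hfw, inner_neg_right] at h2
      rw [inner_smul_right, real_inner_comm, abs_mul, abs_inv, abs_norm, inv_mul_le_iff₀ hw0]
      exact (abs_le.2 ⟨by linarith, h1.le⟩).trans hsx
    · refine (Real.sqrt_le_sqrt (y := 1) ?_).trans_eq Real.sqrt_one
      rw [hu]
      have h3 : ‖a‖ ≤ 1 := by simpa using hB ha
      nlinarith [sq_nonneg ⟪‖w‖⁻¹ • w, a⟫, norm_nonneg a])
  rw [mul_one, mul_right_comm, ← pow_succ', Nat.sub_add_cancel hn] at this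
  rw [mem_ball_zero_iff, lt_div_iff₀ (by positivity)] at hx
  linarith

/-- Bounds for a symmetric convex body normalised to lie in the unit ball and to contain a unit
vector `e`; the parameter `t` is the radius of the smallest cylinder around `ℝe` containing `K`. -/
lemma apriori (hn : 3 ≤ n) (hp : 1 ≤ p) : ∃ D > 0, ∀ K : Set E, IsBody K → K ⊆ closedBall 0 1 →
    (∃ e ∈ K, ‖e‖ = 1) → ∃ t, 0 < t ∧ t ≤ 1 ∧ volume.real K ≤ D * t ^ (n - 1) ∧
      volume.real (sineCentroidPolar n p K) ≤ D / t := by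
  have hp0 : 0 < p := by linarith
  have hc := tildeC_pos (by omega : 2 ≤ n) hp0
  set C : ℝ := 2 * (2 ^ n * tildeC n p) ^ (1 / p) with hC
  have hC0 : 0 < C := by positivity
  set D1 : ℝ := 2 * 2 ^ (n - 1)
  set D2 : ℝ := 2 * (2 * C) * (2 * C) ^ (n - 1)
  refine ⟨max D1 D2, lt_max_of_lt_left (by positivity), ?_⟩
  rintro K hK hB ⟨e, heK, he⟩
  have hsc : Continuous (fun z : E => sinePair e z) := by
    unfold sinePair; fun_prop
  obtain ⟨z, hz, hzmax⟩ := hK.compact.exists_isMaxOn ⟨e, heK⟩ hsc.continuousOn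
  have hee : ⟪e, e⟫ = 1 := by rw [real_inner_self_eq_norm_sq, he]; norm_num
  have hK1 : ∀ a ∈ K, ‖a‖ ≤ 1 := fun a ha => by simpa using hB ha
  have hin : ∀ a ∈ K, |⟪a, e⟫| ≤ 1 := fun a ha => by
    have := abs_real_inner_le_norm a e
    rw [he, mul_one] at this
    exact this.trans (hK1 a ha)
  set t := sinePair e z with ht
  have hV : volume.real K ≤ 2 * 1 * (2 * t) ^ (n - 1) :=
    volume_cylinder_le (by omega) he zero_le_one (sinePair_nonneg _ _)
      (fun a ha => ⟨hin a ha, hzmax ha⟩)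
  have ht0 : 0 < t := by
    refine lt_of_le_of_ne (sinePair_nonneg _ _) (fun h => ?_)
    rw [← h, mul_zero, zero_pow (by omega), mul_zero] at hV
    exact absurd hK.isGood.real_pos (not_lt.2 hV)
  have ht1 : t ≤ 1 := by
    refine (Real.sqrt_le_sqrt (y := 1) ?_).trans_eq Real.sqrt_one
    rw [he]
    nlinarith [sq_nonneg ⟪e, z⟫, norm_nonneg z, hK1 z hz]
  have hbound : ∀ x ∈ sineCentroidPolar n p K, ∀ a ∈ K, sinePair x a ≤ C := by
    intro x hx a ha
    have h := sinePair_le_of_mem_polar (by omega) hp hK hx ha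
    have h2 := Real.rpow_le_rpow (by have := sinePair_nonneg x a; positivity) h
      (by positivity : 0 ≤ 1 / p)
    rw [← Real.rpow_mul (by have := sinePair_nonneg x a; positivity), mul_one_div_cancel hp0.ne',
      Real.rpow_one] at h2
    rw [hC]
    linarith
  have hW : volume.real (sineCentroidPolar n p K) ≤ 2 * (2 * C / t) * (2 * C) ^ (n - 1) := by
    refine volume_cylinder_le (by omega) he (by positivity) (by positivity) (fun x hx => ⟨?_, ?_⟩)
    · set w := z - ⟪z, e⟫ • e with hw
      have hwt : ‖w‖ = t := (sinePair_unit he z).symm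
      have hew : ⟪e, w⟫ = 0 := by
        rw [hw, inner_sub_right, inner_smul_right, hee, real_inner_comm]; ring
      have h1 : sinePair x w ≤ 2 * C := by
        rw [hw, sub_eq_add_neg, ← neg_smul]
        refine (sinePair_add_right_le _ _ _).trans ?_
        rw [sinePair_smul_right, abs_neg]
        have a1 := hbound x hx z hz
        have a2 := hbound x hx e heK
        have a3 := hin z hz
        have := sinePair_nonneg x e
        nlinarith
      -- the component of `x` along `e` is orthogonal to `w`
      have h2 : (|⟪x, e⟫| * t) ^ 2 ≤ sinePair x w ^ 2 := by
        rw [sinePair_sq, hwt, mul_pow, sq_abs]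
        have b1 : ⟪x, w⟫ = ⟪x - ⟪x, e⟫ • e, w⟫ := by
          rw [inner_sub_left, inner_smul_left, hew]; simp
        have b2 := inner_sq_le (x - ⟪x, e⟫ • e) w
        rw [← b1, hwt] at b2
        have b3 : ‖x - ⟪x, e⟫ • e‖ ^ 2 = ‖x‖ ^ 2 - ⟪x, e⟫ ^ 2 := by
          rw [← sinePair_unit he, sinePair_sq, he, real_inner_comm]; ring
        rw [b3] at b2
        nlinarith
      have h3 := (sq_le_sq₀ (by positivity) (sinePair_nonneg _ _)).1 h2
      rw [le_div_iff₀ ht0]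
      exact h3.trans h1
    · rw [sinePair_comm]
      have := hbound x hx e heK
      linarith
  refine ⟨t, ht0, ht1, hV.trans ?_, hW.trans ?_⟩
  · rw [mul_one, mul_pow, ← mul_assoc]
    gcongr
    exact le_max_left _ _
  · have : 2 * (2 * C / t) * (2 * C) ^ (n - 1) = D2 / t := by simp only [D2]; ring
    rw [this]
    gcongr
    exact le_max_right _ _

end Box

/-! ### Existence of a maximiser of the volume product -/

section Existence

variable {n : ℕ} {p : ℝ} {K : Set (EuclideanSpace ℝ (Fin n))}

local notation "E" => EuclideanSpace ℝ (Fin n)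

/-- The volume product is dilation invariant, so a body may be rescaled to circumradius one. -/
lemma IsBody.normalise (hn : 2 ≤ n) (hp : 1 ≤ p) (hK : IsBody K) :
    ∃ K' : Set E, IsBody K' ∧ K' ⊆ closedBall 0 1 ∧ (∃ e ∈ K', ‖e‖ = 1) ∧
      volProd n p K' = volProd n p K := by
  obtain ⟨z, hz, hmax⟩ := hK.compact.exists_isMaxOn (hK.int.mono interior_subset)
    continuous_norm.continuousOn
  have hz0 : 0 < ‖z‖ := by
    by_contra h
    have hsub : K ⊆ (Submodule.span ℝ {z} : Set E) := by
      intro x hx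
      have h1 : ‖x‖ ≤ ‖z‖ := hmax hx
      have : x = 0 := norm_le_zero_iff.1 (h1.trans (not_lt.1 h))
      rw [this]
      exact Submodule.zero_mem _
    exact hK.isGood.ne_zero (measure_mono_null hsub (volume_span_singleton hn z))
  refine ⟨‖z‖⁻¹ • K, hK.smul (inv_pos.2 hz0), ?_, ⟨‖z‖⁻¹ • z, smul_mem_smul_set hz, ?_⟩,
    volProd_smul hp (inv_pos.2 hz0)⟩
  · rintro _ ⟨x, hx, rfl⟩
    have h1 : ‖x‖ ≤ ‖z‖ := hmax hx
    simpa [norm_smul, inv_mul_le_iff₀ hz0] using h1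
  · rw [norm_smul, norm_inv, norm_norm, inv_mul_cancel₀ hz0.ne']

/-- Hausdorff-closeness to a convex set containing a fixed ball is dilation-closeness. -/
lemma subset_smul_of_close {L : Set E} (hL : Convex ℝ L) {r ε : ℝ} (hr : 0 < r) (hε : 0 < ε)
    (hB : closedBall 0 r ⊆ L) (h : ∀ x ∈ K, ∃ y ∈ L, dist x y < ε) : K ⊆ (1 + ε / r) • L := by
  intro x hx
  obtain ⟨y, hy, hxy⟩ := h x hx
  rw [hL.add_smul zero_le_one (by positivity), one_smul]
  refine ⟨y, hy, (ε / r) • ((r / ε) • (x - y)), smul_mem_smul_set (hB ?_), ?_⟩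
  · rw [dist_eq_norm] at hxy
    rw [mem_closedBall_zero_iff, norm_smul, Real.norm_of_nonneg (by positivity), div_mul_eq_mul_div,
      div_le_iff₀ hε]
    gcongr
  · simp only [smul_smul]
    rw [div_mul_div_cancel₀ hr.ne', div_self hε.ne', one_smul, add_sub_cancel]

/-- The direct method: after normalisation the volume product is at most a multiple of the
cylinder radius `t` of `apriori`, so a maximising sequence cannot degenerate, and a Hausdorff limit
of it is a maximiser. This uses `n ≥ 3`, through `t ^ (n - 2) ≤ t`. -/
lemma exists_max_body (hn : 3 ≤ n) (hp : 1 ≤ p) :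
    ∃ L : Set E, IsBody L ∧ ∀ K : Set E, IsBody K → volProd n p K ≤ volProd n p L := by
  have hp0 : 0 < p := by linarith
  obtain ⟨D, hD, hap⟩ := apriori (n := n) (p := p) hn hp
  set A : Set ℝ := {s | ∃ K : Set E, IsBody K ∧ volProd n p K = s} with hA
  have hprod : ∀ K : Set E, IsBody K → K ⊆ closedBall 0 1 → (∃ e ∈ K, ‖e‖ = 1) →
      ∃ t, 0 < t ∧ t ≤ 1 ∧ volProd n p K ≤ D * D * t ∧
        volume.real (sineCentroidPolar n p K) ≤ D / t := by
    intro K hK hB he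
    obtain ⟨t, ht0, ht1, h1, h2⟩ := hap K hK hB he
    refine ⟨t, ht0, ht1, ?_, h2⟩
    calc volProd n p K ≤ (D * t ^ (n - 1)) * (D / t) := by
          unfold volProd; gcongr
      _ = D * D * t ^ (n - 2) := by
          rw [show n - 1 = (n - 2) + 1 by omega, pow_succ]
          field_simp
      _ ≤ D * D * t ^ 1 := by
          gcongr D * D * ?_
          exact pow_le_pow_of_le_one ht0.le ht1 (by omega)
      _ = _ := by rw [pow_one]
  have hbd : BddAbove A := by
    refine ⟨D * D, ?_⟩
    rintro _ ⟨K, hK, rfl⟩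
    obtain ⟨K', hK', hB, he, heq⟩ := hK.normalise (p := p) (by omega) hp
    obtain ⟨t, ht0, ht1, h1, -⟩ := hprod K' hK' hB he
    rw [← heq]
    exact h1.trans (mul_le_of_le_one_right (by positivity) ht1)
  have hB1 : IsBody (closedBall (0 : E) 1) := ⟨isCompact_closedBall _ _, convex_closedBall _ _,
    by simp, ⟨0, ball_subset_interior_closedBall (by simp)⟩⟩
  have hAne : A.Nonempty := ⟨_, _, hB1, rfl⟩
  set S := sSup A with hS
  have hS0 : 0 < S :=
    (volProd_pos (by omega) hp hB1.isGood).trans_le (le_csSup hbd ⟨_, hB1, rfl⟩)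
  obtain ⟨u, -, hu, huA⟩ := exists_seq_tendsto_sSup hAne hbd
  have hex : ∀ j, ∃ K : Set E, IsBody K ∧ K ⊆ closedBall 0 1 ∧ (∃ e ∈ K, ‖e‖ = 1) ∧
      volProd n p K = u j := by
    intro j
    obtain ⟨K, hK, hKu⟩ := huA j
    obtain ⟨K', hK', hB, he, heq⟩ := hK.normalise (p := p) (by omega) hp
    exact ⟨K', hK', hB, he, heq.trans hKu⟩
  choose X hX hXB hXe hXu using hex
  obtain ⟨N, hN⟩ := Filter.eventually_atTop.1 (hu.eventually (lt_mem_nhds (half_lt_self hS0)))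
  -- `volProd ≥ S / 2` forces `t ≥ S / (2 D²)`, which bounds the volume of `X j` below by `v`
  set v : ℝ := S / 2 * (S / (2 * (D * D))) / D with hv
  have hv0 : 0 < v := by positivity
  have hvol : ∀ j, N ≤ j → v ≤ volume.real (X j) := by
    intro j hj
    obtain ⟨t, ht0, ht1, h1, h2⟩ := hprod _ (hX j) (hXB j) (hXe j)
    have hΦ : S / 2 ≤ volProd n p (X j) := by rw [hXu]; exact (hN j hj).le
    have ht : S / (2 * (D * D)) ≤ t := by
      rw [div_le_iff₀ (by positivity)]; nlinarith
    have h3 : S / 2 ≤ volume.real (X j) * (D / t) :=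
      hΦ.trans (mul_le_mul_of_nonneg_left h2 measureReal_nonneg)
    rw [hv, div_le_iff₀ hD]
    calc S / 2 * (S / (2 * (D * D))) ≤ (volume.real (X j) * (D / t)) * t := by gcongr
      _ = _ := by field_simp
  set r : ℝ := v / 2 ^ n / 2 with hr
  have hr0 : 0 < r := by positivity
  have hrX : ∀ j, N ≤ j → closedBall 0 r ⊆ X j := fun j hj =>
    (closedBall_subset_ball (half_lt_self (by positivity))).trans
      ((hX j).closedBall_subset (by omega) (hXB j) (hvol j hj))
  obtain ⟨L, hLc, hLne, hLB, φ, hφ, hlim⟩ := blaschke_selection (fun j => X (N + j))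
    (fun j => (hX _).compact) (fun j => (hX _).int.mono interior_subset) (fun j => hXB _)
  have hmem : ∀ x : E, (∀ ε > 0, ∃ y ∈ L, dist x y < ε) → x ∈ L := fun x h => by
    rw [← hLc.isClosed.closure_eq]
    exact Metric.mem_closure_iff.2 h
  have hLr : closedBall 0 r ⊆ L := by
    refine fun x hx => hmem x fun ε hε => ?_
    obtain ⟨j, h1, -⟩ := (hlim ε hε).exists
    exact h1 x (hrX _ (by omega) hx)
  have hL : IsBody L := by
    refine ⟨hLc, ?_, ?_, ⟨0, interior_mono hLr (ball_subset_interior_closedBall (by simpa))⟩⟩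
    · intro x hx y hy a b ha hb hab
      refine hmem _ fun ε hε => ?_
      obtain ⟨j, h1, h2⟩ := (hlim (ε / 2) (by positivity)).exists
      obtain ⟨x', hx', hxx⟩ := h2 x hx
      obtain ⟨y', hy', hyy⟩ := h2 y hy
      obtain ⟨z, hz, hzz⟩ := h1 _ ((hX _).convex hx' hy' ha hb hab)
      refine ⟨z, hz, (dist_triangle _ (a • x' + b • y') _).trans_lt ?_⟩
      have h3 : dist (a • x + b • y) (a • x' + b • y') ≤ ε / 2 := by
        refine (dist_add_add_le _ _ _ _).trans ?_
        rw [dist_smul₀, dist_smul₀, Real.norm_of_nonneg ha, Real.norm_of_nonneg hb]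
        nlinarith
      linarith
    · intro x hx
      refine hmem _ fun ε hε => ?_
      obtain ⟨j, h1, h2⟩ := (hlim (ε / 2) (by positivity)).exists
      obtain ⟨x', hx', hxx⟩ := h2 x hx
      obtain ⟨z, hz, hzz⟩ := h1 _ ((hX _).symm _ hx')
      refine ⟨z, hz, (dist_triangle _ (-x') _).trans_lt ?_⟩
      rw [dist_neg_neg]
      linarith
  let F : ℝ → ℝ := fun ε => (1 + ε / r) ^ n *
    (((1 + ε / r) ^ n * (1 + ε / r) ^ p * (1 + ε / r) ^ n) ^ (1 / p)) ^ n
  have hS_le : ∀ ε > 0, S ≤ F ε * volProd n p L := by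
    intro ε hε
    have hsub : Filter.Tendsto (fun j => u (N + φ j)) Filter.atTop (nhds S) :=
      hu.comp (Filter.tendsto_atTop_mono (fun j => Nat.le_add_left _ _) hφ.tendsto_atTop)
    refine le_of_tendsto hsub ?_
    filter_upwards [hlim ε hε] with j hj
    rw [← hXu]
    exact volProd_le_of_subset_smul (by omega) hp (hX _).isGood hL.isGood (by positivity)
      (subset_smul_of_close hL.convex hr0 hε hLr hj.1)
      (subset_smul_of_close (hX _).convex hr0 hε (hrX _ (by omega)) hj.2)
  have hF : ContinuousAt F 0 := by
    have h1 : ContinuousAt (fun ε : ℝ => 1 + ε / r) 0 := by fun_prop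
    exact (h1.pow n).mul (((((h1.pow n).mul (h1.rpow_const (Or.inl (by simp)))).mul
      (h1.pow n)).rpow_const (Or.inl (by simp))).pow n)
  have hF1 : F 0 = 1 := by simp [F]
  have hlimF : Filter.Tendsto (fun ε => F ε * volProd n p L) (nhdsWithin 0 (Ioi 0))
      (nhds (volProd n p L)) := by
    have := (hF.tendsto.mono_left (nhdsWithin_le_nhds (s := Ioi 0))).mul_const (volProd n p L)
    rwa [hF1, one_mul] at this
  refine ⟨L, hL, fun K hK => (le_csSup hbd ⟨K, hK, rfl⟩).trans ?_⟩
  exact ge_of_tendsto hlimF (eventually_nhdsWithin_of_forall fun ε hε => hS_le ε hε)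

/-- The volume product attains its maximum over all bounded measurable sets of positive
volume, at an
origin-symmetric convex body. -/
lemma exists_max (hn : 3 ≤ n) (hp : 1 ≤ p) :
    ∃ L : Set E, IsBody L ∧ ∀ K : Set E, IsGood K → volProd n p K ≤ volProd n p L := by
  obtain ⟨L, hL, hmax⟩ := exists_max_body (n := n) hn hp
  exact ⟨L, hL, fun K hK => (volProd_le_polar (by omega) hp hK).1.trans
    (hmax _ (isBody_polar (by omega) hp hK))⟩

end Existence

/-! ### Shears along a line and the midpoint function of a body -/

section Shear

variable {n : ℕ} {K L : Set (EuclideanSpace ℝ (Fin n))}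

local notation "E" => EuclideanSpace ℝ (Fin n)

/-- Change of variables for the shear `x ↦ x - f(x) u`, where `f` is constant along `u`. Averaging
against the indicator of `[0, 1]` in an auxiliary variable reduces it to translation invariance. -/
lemma lintegral_shear {u : E} {f : E → ℝ} (hf : Measurable f) (hfu : ∀ x (t : ℝ), f (x + t • u) = f x)
    {g : E → ℝ≥0∞} (hg : Measurable g) : ∫⁻ x, g (x - f x • u) = ∫⁻ x, g x := by
  let φ : ℝ → ℝ≥0∞ := (Icc (0 : ℝ) 1).indicator 1
  have hφm : Measurable φ := measurable_one.indicator measurableSet_Icc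
  have hφ : ∫⁻ t, φ t = 1 := by
    simp [φ, lintegral_indicator_one]
  calc ∫⁻ x, g (x - f x • u) = ∫⁻ x, ∫⁻ t, φ t * g (x - f x • u) := by
        refine lintegral_congr fun x => ?_
        rw [lintegral_mul_const _ hφm, hφ, one_mul]
    _ = ∫⁻ t, ∫⁻ x, φ t * g (x - f x • u) := by
        refine lintegral_lintegral_swap (Measurable.aemeasurable ?_)
        fun_prop
    _ = ∫⁻ t, ∫⁻ x, φ t * g (x + (t - f x) • u) := by
        refine lintegral_congr fun t => ?_
        rw [← lintegral_add_right_eq_self (fun x => φ t * g (x - f x • u)) (t • u)]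
        refine lintegral_congr fun x => ?_
        rw [hfu]
        congr 2
        module
    _ = ∫⁻ x, ∫⁻ t, φ t * g (x + (t - f x) • u) := by
        refine lintegral_lintegral_swap (Measurable.aemeasurable ?_)
        fun_prop
    _ = ∫⁻ x, ∫⁻ t, φ (t + f x) * g (x + t • u) := by
        refine lintegral_congr fun x => ?_
        rw [← lintegral_add_right_eq_self (fun t => φ t * g (x + (t - f x) • u)) (f x)]
        simp
    _ = ∫⁻ t, ∫⁻ x, φ (t + f x) * g (x + t • u) := by
        refine lintegral_lintegral_swap (Measurable.aemeasurable ?_)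
        fun_prop
    _ = ∫⁻ t, ∫⁻ x, φ (t + f x) * g x := by
        refine lintegral_congr fun t => ?_
        rw [← lintegral_add_right_eq_self (fun x => φ (t + f x) * g x) (t • u)]
        refine lintegral_congr fun x => ?_
        rw [hfu]
    _ = ∫⁻ x, ∫⁻ t, φ (t + f x) * g x := by
        refine lintegral_lintegral_swap (Measurable.aemeasurable ?_)
        fun_prop
    _ = ∫⁻ x, g x := by
        refine lintegral_congr fun x => ?_
        rw [lintegral_mul_const _ (by fun_prop), lintegral_add_right_eq_self φ, hφ, one_mul]

lemma measurePreserving_shear {u : E} {f : E → ℝ} (hf : Measurable f)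
    (hfu : ∀ x (t : ℝ), f (x + t • u) = f x) :
    MeasurePreserving (fun x : E => x - f x • u) volume volume := by
  have hm : Measurable (fun x : E => x - f x • u) := by fun_prop
  refine ⟨hm, Measure.ext fun s hs => ?_⟩
  rw [Measure.map_apply hm hs, ← lintegral_indicator_one hs, ← lintegral_indicator_one (hm hs),
    ← lintegral_shear hf hfu (measurable_one.indicator hs)]
  rfl

/-- The midpoint function of `L` in the direction `u`: every chord of `L` parallel to `u` is
symmetric about its point with `u`-coordinate `f`. -/
lemma IsBody.exists_midpoint (hL : IsBody L) {u : E} (hu : ‖u‖ = 1) :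
    ∃ f : E → ℝ, Measurable f ∧ (∃ R, ∀ x, |f x| ≤ R) ∧ (∀ x (t : ℝ), f (x + t • u) = f x) ∧
      ∀ x, x ∈ L ↔ x - (2 * ⟪x, u⟫) • u + (2 * f x) • u ∈ L := by
  have huu : ⟪u, u⟫ = 1 := by rw [real_inner_self_eq_norm_sq, hu]; norm_num
  let P : E → E := fun x => x - ⟪x, u⟫ • u
  have hPc : Continuous P := by fun_prop
  have hPu : ∀ x (t : ℝ), P (x + t • u) = P x := by
    intro x t
    simp only [P, inner_add_left, inner_smul_left, huu, conj_trivial, mul_one]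
    module
  have hPP : ∀ x, P (P x) = P x := by
    intro x
    have := hPu x (-⟪x, u⟫)
    rw [neg_smul, ← sub_eq_add_neg] at this
    exact this
  have hPx : ∀ x, P x + ⟪x, u⟫ • u = x := fun x => sub_add_cancel _ _
  have hPin : ∀ x, ⟪P x, u⟫ = 0 := by
    intro x
    simp only [P, inner_sub_left, inner_smul_left, huu, conj_trivial, mul_one, sub_self]
  let fib : E → Set ℝ := fun x => {s | P x + s • u ∈ L}
  obtain ⟨R, hR⟩ := hL.compact.isBounded.subset_closedBall 0
  have hfR : ∀ x, ∀ s ∈ fib x, |s| ≤ R := by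
    intro x s (hs : P x + s • u ∈ L)
    have h1 : ‖P x + s • u‖ ≤ R := by simpa using hR hs
    have h2 := abs_real_inner_le_norm (P x + s • u) u
    rw [inner_add_left, inner_smul_left, huu, hPin, hu] at h2
    simp only [conj_trivial, mul_one, zero_add] at h2
    exact h2.trans h1
  have hfc : ∀ x, IsClosed (fib x) := fun x =>
    hL.compact.isClosed.preimage (by fun_prop : Continuous fun s : ℝ => P x + s • u)
  have hfb : ∀ x, BddAbove (fib x) := fun x => ⟨R, fun s hs => (abs_le.1 (hfR x s hs)).2⟩
  let β : E → ℝ := fun x => sSup (fib x)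
  have hβmem : ∀ x, (fib x).Nonempty → β x ∈ fib x := fun x hx => (hfc x).csSup_mem hx (hfb x)
  have hR0 : 0 ≤ R := by
    obtain ⟨y, hy⟩ := hL.int.mono interior_subset
    exact (norm_nonneg y).trans (by simpa using hR hy)
  have hβR : ∀ x, |β x| ≤ R := by
    intro x
    by_cases hx : (fib x).Nonempty
    · exact hfR x _ (hβmem x hx)
    · simp only [β, not_nonempty_iff_eq_empty.1 hx, Real.sSup_empty, abs_zero]
      exact hR0
  -- superlevel sets of `β` are projections of compact sets, up to the junk value off the shadow
  have hβm : Measurable β := by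
    refine measurable_of_Ici fun c => ?_
    let Q : Set ℝ → Set E := fun T => P ⁻¹' (P '' (L ∩ (fun x => ⟪x, u⟫) ⁻¹' T))
    have hQ : ∀ T, IsClosed T → IsClosed (Q T) := fun T hT =>
      ((hL.compact.inter_right (hT.preimage (by fun_prop))).image hPc).isClosed.preimage hPc
    have hQm : ∀ T x, x ∈ Q T ↔ ∃ s ∈ T, s ∈ fib x := by
      intro T x
      constructor
      · rintro ⟨y, ⟨hyL, hyT⟩, hyx⟩
        refine ⟨⟪y, u⟫, hyT, ?_⟩
        show P x + _ ∈ L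
        rw [← hyx, hPx]
        exact hyL
      · rintro ⟨s, hsT, hs⟩
        refine ⟨P x + s • u, ⟨hs, ?_⟩, ?_⟩
        · show ⟪P x + s • u, u⟫ ∈ T
          rw [inner_add_left, inner_smul_left, huu, hPin]
          simpa using hsT
        · rw [hPu, hPP]
    have heq : β ⁻¹' Ici c = Q (Ici c) ∪ ((Q univ)ᶜ ∩ {_x | c ≤ 0}) := by
      ext x
      rw [mem_union, mem_inter_iff, mem_compl_iff, hQm, hQm, mem_preimage, mem_Ici]
      constructor
      · intro h
        by_cases hx : (fib x).Nonempty
        · exact Or.inl ⟨β x, h, hβmem x hx⟩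
        · refine Or.inr ⟨fun ⟨s, _, hs⟩ => hx ⟨s, hs⟩, ?_⟩
          simp only [β, not_nonempty_iff_eq_empty.1 hx, Real.sSup_empty] at h
          exact h
      · rintro (⟨s, hs, hsx⟩ | ⟨h1, h2⟩)
        · exact le_trans hs (le_csSup (hfb x) hsx)
        · have hx : fib x = ∅ := by
            by_contra hne
            obtain ⟨s, hs⟩ := nonempty_iff_ne_empty.2 hne
            exact h1 ⟨s, mem_univ _, hs⟩
          simp only [β, hx, Real.sSup_empty]
          exact h2
    rw [heq]
    exact (hQ _ isClosed_Ici).measurableSet.union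
      ((hQ _ isClosed_univ).measurableSet.compl.inter (MeasurableSet.const _))
  have hβu : ∀ x (t : ℝ), β (x + t • u) = β x := by
    intro x t
    simp only [β, fib, hPu]
  have hPneg : ∀ x, P (-x) = -P x := by
    intro x
    simp only [P, inner_neg_left]
    module
  have hfneg : ∀ x s, s ∈ fib (-x) ↔ -s ∈ fib x := by
    intro x s
    have e : P (-x) + s • u = -(P x + (-s) • u) := by rw [hPneg]; module
    show P (-x) + s • u ∈ L ↔ P x + (-s) • u ∈ L
    rw [e]
    exact ⟨fun h => by simpa using hL.symm _ h, fun h => hL.symm _ h⟩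
  have hfib : ∀ x s, s ∈ fib x → (∀ s', s' ∈ fib x ↔ -β (-x) ≤ s' ∧ s' ≤ β x) := by
    intro x s hs s'
    have hne : (fib x).Nonempty := ⟨s, hs⟩
    have hne' : (fib (-x)).Nonempty := ⟨-s, (hfneg x _).2 (by simpa using hs)⟩
    constructor
    · intro hs'
      refine ⟨?_, le_csSup (hfb x) hs'⟩
      have : -s' ≤ β (-x) := le_csSup (hfb (-x)) ((hfneg x _).2 (by simpa using hs'))
      linarith
    · rintro ⟨h1, h2⟩
      have hconv : Convex ℝ (fib x) := by
        intro a ha b hb c d hc hd hcd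
        have := hL.convex (show P x + a • u ∈ L from ha) (show P x + b • u ∈ L from hb) hc hd hcd
        show P x + (c • a + d • b) • u ∈ L
        convert this using 1
        obtain rfl : d = 1 - c := by linarith
        simp only [smul_eq_mul]
        module
      exact hconv.ordConnected.out ((hfneg x _).1 (hβmem _ hne')) (hβmem _ hne) ⟨h1, h2⟩
  refine ⟨fun x => (β x - β (-x)) / 2, ?_, ⟨R, fun x => ?_⟩, ?_, ?_⟩
  · exact (hβm.sub (hβm.comp measurable_neg)).div_const 2
  · have h1 := abs_le.1 (hβR x)
    have h2 := abs_le.1 (hβR (-x))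
    rw [abs_le]
    constructor <;> linarith [h1.1, h1.2, h2.1, h2.2]
  · intro x t
    show (β (x + t • u) - β (-(x + t • u))) / 2 = _
    rw [hβu, show -(x + t • u) = -x + (-t) • u by module, hβu]
  · intro x
    have e1 : x ∈ L ↔ ⟪x, u⟫ ∈ fib x := by
      show _ ↔ P x + _ ∈ L
      rw [hPx]
    have e2 : x - (2 * ⟪x, u⟫) • u + (2 * ((β x - β (-x)) / 2)) • u ∈ L ↔
        (β x - β (-x) - ⟪x, u⟫) ∈ fib x := by
      show _ ↔ P x + _ ∈ L
      have : x - (2 * ⟪x, u⟫) • u + (2 * ((β x - β (-x)) / 2)) • u =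
          P x + (β x - β (-x) - ⟪x, u⟫) • u := by
        simp only [P]; module
      rw [this]
    rw [e1, e2]
    constructor
    · intro h
      obtain ⟨h1, h2⟩ := (hfib x _ h _).1 h
      exact (hfib x _ h _).2 ⟨by linarith, by linarith⟩
    · intro h
      obtain ⟨h1, h2⟩ := (hfib x _ h _).1 h
      exact (hfib x _ h _).2 ⟨by linarith, by linarith⟩

end Shear

/-! ### Maximisers are invariant under reflections -/

section Steiner

variable {n : ℕ} {p : ℝ} {K L : Set (EuclideanSpace ℝ (Fin n))}

local notation "E" => EuclideanSpace ℝ (Fin n)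

lemma reflection_formula {u : E} (hu : ‖u‖ = 1) (x : E) :
    (Submodule.span ℝ {u})ᗮ.reflection x = x - (2 * ⟪x, u⟫) • u := by
  rw [Submodule.reflection_orthogonal_apply, Submodule.reflection_singleton_apply, hu,
    real_inner_comm]
  simp only [RCLike.ofReal_one, one_pow, div_one]
  module

/-- The Steiner symmetral of `K` in direction `u`, given through the shear by the midpoint function
`f`, together with the chordwise reflection of `K`. -/
lemma IsBody.exists_steiner (hK : IsBody K) {u : E} (hu : ‖u‖ = 1) :
    ∃ (f : E → ℝ) (K1 : Set E), IsGood K1 ∧ volume.real K1 = volume.real K ∧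
      MeasurePreserving (fun x : E => x - f x • u) (volume.restrict K) (volume.restrict K1) ∧
      MeasurePreserving (fun x : E => x - (2 * ⟪x, u⟫) • u + (2 * f x) • u)
        (volume.restrict K) (volume.restrict K) ∧
      ∀ x, x ∈ K ↔ x - (2 * ⟪x, u⟫) • u + (2 * f x) • u ∈ K := by
  obtain ⟨f, hf, ⟨R, hR⟩, hfu, hmem⟩ := hK.exists_midpoint hu
  have huu : ⟪u, u⟫ = 1 := by rw [real_inner_self_eq_norm_sq, hu]; norm_num
  have hg := hK.isGood
  have hinv : MeasurePreserving (fun x : E => x - (-f x) • u) volume volume :=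
    measurePreserving_shear hf.neg (fun x t => by simp only [Pi.neg_apply, hfu])
  have hS := measurePreserving_shear hf hfu
  have h2 : MeasurePreserving (fun x : E => x - (2 * f x) • u) volume volume :=
    measurePreserving_shear (hf.const_mul 2) (fun x t => by rw [hfu])
  set K1 : Set E := (fun x : E => x - (-f x) • u) ⁻¹' K with hK1
  have hpre : (fun x : E => x - f x • u) ⁻¹' K1 = K := by
    ext x
    have e : f (x - f x • u) = f x := by
      rw [sub_eq_add_neg, ← neg_smul, hfu]
    simp only [hK1, mem_preimage, e]
    rw [show x - f x • u - (-f x) • u = x by module]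
  have hvol : volume K1 = volume K := hinv.measure_preimage hg.meas.nullMeasurableSet
  have hK1m : MeasurableSet K1 := hinv.measurable hg.meas
  refine ⟨f, K1, ⟨hK1m, ?_, by rw [hvol]; exact hg.ne_zero⟩, ?_, ?_, ?_, hmem⟩
  · obtain ⟨B, hB⟩ := isBounded_iff_forall_norm_le.1 hg.bdd
    refine isBounded_iff_forall_norm_le.2 ⟨B + R, fun x hx => ?_⟩
    have h1 : ‖x - (-f x) • u‖ ≤ B := hB _ hx
    have e : x = (x - (-f x) • u) + (-f x) • u := by module
    rw [e]
    refine (norm_add_le _ _).trans (add_le_add h1 ?_)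
    rw [norm_smul, hu, mul_one, Real.norm_eq_abs, abs_neg]
    exact hR x
  · rw [measureReal_def, hvol, measureReal_def]
  · have := hS.restrict_preimage hK1m
    rwa [hpre] at this
  · have hρ : MeasurePreserving (fun x : E => x - (2 * ⟪x, u⟫) • u + (2 * f x) • u)
        volume volume := by
      have := ((Submodule.span ℝ {u})ᗮ.reflection.measurePreserving).comp h2
      refine (funext fun x => ?_ : (fun x : E => x - (2 * ⟪x, u⟫) • u + (2 * f x) • u) = _) ▸ this
      rw [Function.comp_apply, reflection_formula hu, inner_sub_left, inner_smul_left, huu]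
      simp only [conj_trivial, mul_one]
      module
    have := hρ.restrict_preimage hg.meas
    have e : (fun x : E => x - (2 * ⟪x, u⟫) • u + (2 * f x) • u) ⁻¹' K = K := by
      ext x
      exact (hmem x).symm
    rwa [e] at this

lemma volume_span_pair (hn : 3 ≤ n) (x y : E) :
    volume (Submodule.span ℝ {x, y} : Set E) = 0 := by
  apply Measure.addHaar_submodule
  intro h
  have h1 := finrank_span_finset_le_card (R := ℝ) ({x, y} : Finset E)
  rw [Finset.coe_pair, Set.finrank, h, finrank_top, finrank_euclideanSpace_fin] at h1
  have := Finset.card_le_two (a := x) (b := y)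
  omega

/-- A maximiser of the volume product is symmetric about every hyperplane through the origin: the
symmetrals of `L` and `Λ_p°L` have the same volumes, and their energy is strictly smaller unless
the midpoint functions vanish almost everywhere. -/
lemma IsBody.reflect_mem (hn : 3 ≤ n) (hp : 1 ≤ p) (hL : IsBody L)
    (hmax : ∀ K : Set E, IsGood K → volProd n p K ≤ volProd n p L) {u : E} (hu : ‖u‖ = 1) :
    ∀ x ∈ L, x - (2 * ⟪x, u⟫) • u ∈ L := by
  have hp0 : 0 < p := by linarith
  have hn2 : 2 ≤ n := by omega
  have hn0 : (0 : ℝ) < n := by exact_mod_cast (by omega : 0 < n)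
  set M := sineCentroidPolar n p L with hM
  have hMb : IsBody M := isBody_polar hn2 hp hL.isGood
  have hgL := hL.isGood
  have hgM := hMb.isGood
  obtain ⟨f, L1, hL1, hL1v, hSf, hρf, hmem⟩ := hL.exists_steiner hu
  obtain ⟨g, M1, hM1, hM1v, hSg, hρg, -⟩ := hMb.exists_steiner hu
  have : IsFiniteMeasure (volume.restrict L) := ⟨by simpa using hgL.ne_top.lt_top⟩
  have : IsFiniteMeasure (volume.restrict M) := ⟨by simpa using hgM.ne_top.lt_top⟩
  have : IsFiniteMeasure (volume.restrict L1) := ⟨by simpa using hL1.ne_top.lt_top⟩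
  have : IsFiniteMeasure (volume.restrict M1) := ⟨by simpa using hM1.ne_top.lt_top⟩
  let F : E × E → ℝ := fun z => sinePair z.1 z.2 ^ p
  have hF : Continuous F := continuous_sinePair_rpow hp0.le
  have hFint : ∀ A B : Set E, IsGood A → IsGood B →
      Integrable F ((volume.restrict A).prod (volume.restrict B)) := by
    intro A B hA hB
    obtain ⟨R, hR⟩ := hA.bdd.subset_closedBall 0
    obtain ⟨R', hR'⟩ := hB.bdd.subset_closedBall 0
    rw [Measure.prod_restrict]
    exact (hF.continuousOn.integrableOn_compact
      ((isCompact_closedBall (0 : E) R).prod (isCompact_closedBall (0 : E) R'))).mono_set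
      (prod_mono hR hR')
  have hFI : ∀ A B : Set E, IsGood A → IsGood B →
      ∫ z, F z ∂((volume.restrict A).prod (volume.restrict B)) = ∫ x in A, sineMoment p B x :=
    fun A B hA hB => by
      have : SFinite (volume.restrict B) := inferInstance
      exact integral_prod F (hFint A B hA hB)
  set κ := n / (n + p) * tildeC n p with hκ
  have hκ0 : 0 < κ := mul_pos (by positivity) (tildeC_pos hn2 hp0)
  have hI : ∫ z, F z ∂((volume.restrict M).prod (volume.restrict L)) = κ * volProd n p L := by
    rw [hFI M L hgM hgL]
    exact energy_polar hn2 hp0 hgL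
  -- the symmetrals have energy at least that of `(L, M)`, by maximality of `L`
  have hlow : κ * volProd n p L ≤ ∫ z, F z ∂((volume.restrict M1).prod (volume.restrict L1)) := by
    rw [hFI M1 L1 hM1 hL1]
    refine le_trans ?_ (energy_ge hn2 hp hL1 hM1).1
    have hΦ := hmax L1 hL1
    have hP := (isBody_polar hn2 hp hL1).isGood.real_pos
    have hLv : volume.real L1 * volume.real M1 = volProd n p L := by rw [hL1v, hM1v, volProd]
    have hle : volume.real (sineCentroidPolar n p L1) ≤ volume.real M1 := by
      rw [← hLv, volProd] at hΦ
      exact le_of_mul_le_mul_left hΦ hL1.real_pos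
    rw [hLv]
    refine le_mul_of_one_le_right (mul_pos hκ0 (volProd_pos hn2 hp hgL)).le ?_
    exact Real.one_le_rpow ((one_le_div hP).2 hle) (by positivity)
  have hm1 := hSg.prod hSf
  have hm2 := hρg.prod hρf
  let F1 : E × E → ℝ := fun z => F (z.1 - g z.1 • u, z.2 - f z.2 • u)
  let F2 : E × E → ℝ := fun z => F (z.1 - (2 * ⟪z.1, u⟫) • u + (2 * g z.1) • u,
    z.2 - (2 * ⟪z.2, u⟫) • u + (2 * f z.2) • u)
  have i0 := hFint M L hgM hgL
  have i1 : Integrable F1 ((volume.restrict M).prod (volume.restrict L)) :=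
    hm1.integrable_comp_of_integrable (hFint M1 L1 hM1 hL1)
  have i2 : Integrable F2 ((volume.restrict M).prod (volume.restrict L)) :=
    hm2.integrable_comp_of_integrable i0
  have e1 : ∫ z, F1 z ∂((volume.restrict M).prod (volume.restrict L)) =
      ∫ z, F z ∂((volume.restrict M1).prod (volume.restrict L1)) := by
    rw [← hm1.map_eq, integral_map hm1.measurable.aemeasurable hF.aestronglyMeasurable]
    rfl
  have e2 : ∫ z, F2 z ∂((volume.restrict M).prod (volume.restrict L)) =
      ∫ z, F z ∂((volume.restrict M).prod (volume.restrict L)) := by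
    conv_rhs => rw [← hm2.map_eq, integral_map hm2.measurable.aemeasurable hF.aestronglyMeasurable]
    rfl
  have huu : ⟪u, u⟫ = 1 := by rw [real_inner_self_eq_norm_sq, hu]; norm_num
  have hF2 : ∀ x y : E, F2 (x, y) =
      sinePair (x - (2 * g x) • u) (y - (2 * f y) • u) ^ p := by
    intro x y
    have e : ∀ (x : E) (a : ℝ), x - (2 * ⟪x, u⟫) • u + (2 * a) • u =
        (Submodule.span ℝ {u})ᗮ.reflection (x - (2 * a) • u) := by
      intro x a
      rw [reflection_formula hu, inner_sub_left, inner_smul_left, huu]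
      simp only [conj_trivial, mul_one]
      module
    simp only [F2, F, e, sinePair_map]
  -- the defect of the midpoint inequality between the identity, the shear to the symmetrals, and
  -- the chordwise reflection
  let D : E × E → ℝ := fun z => (F z + F2 z) / 2 - F1 z
  have hD0 : ∀ z, 0 ≤ D z := by
    rintro ⟨x, y⟩
    have := (sinePair_rpow_mid hp hu x y (g x) (f y)).1
    simp only [D, hF2, F1, F]
    linarith
  have hDi : Integrable D ((volume.restrict M).prod (volume.restrict L)) :=
    ((i0.add i2).div_const 2).sub i1
  have hDI : ∫ z, D z ∂((volume.restrict M).prod (volume.restrict L)) = 0 := by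
    refine le_antisymm ?_ (integral_nonneg hD0)
    have : ∫ z, D z ∂((volume.restrict M).prod (volume.restrict L)) =
        (∫ z, F z ∂((volume.restrict M).prod (volume.restrict L)) +
          ∫ z, F2 z ∂((volume.restrict M).prod (volume.restrict L))) / 2 -
          ∫ z, F1 z ∂((volume.restrict M).prod (volume.restrict L)) := by
      rw [← integral_add i0 i2, ← integral_div]
      exact integral_sub ((i0.add i2).div_const 2) i1
    rw [this, e1, e2]
    linarith
  have hDae := (integral_eq_zero_iff_of_nonneg hD0 hDi).1 hDI
  have hxy := Measure.ae_ae_of_ae_prod hDae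
  have hspan : ∀ᵐ x ∂(volume.restrict M), x ∉ (Submodule.span ℝ {u} : Set E) :=
    ae_restrict_of_ae (measure_eq_zero_iff_ae_notMem.1 (volume_span_singleton hn2 u))
  have : Filter.NeBot (ae (volume.restrict M)) := by
    rw [ae_neBot, Ne, Measure.restrict_eq_zero]
    exact hgM.ne_zero
  obtain ⟨x0, hx0, hx0u⟩ := (hxy.and hspan).exists
  -- `x0` is now fixed, off the line `ℝu`
  have hf0 : ∀ᵐ y ∂(volume.restrict L), f y = 0 := by
    have hpair : ∀ᵐ y ∂(volume.restrict L), y ∉ (Submodule.span ℝ {x0, u} : Set E) :=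
      ae_restrict_of_ae (measure_eq_zero_iff_ae_notMem.1 (volume_span_pair hn x0 u))
    filter_upwards [hx0, hpair] with y hy hyp
    by_contra hfy
    have hx1 : x0 - ⟪x0, u⟫ • u ≠ 0 := by
      intro h
      exact hx0u (Submodule.mem_span_singleton.2 ⟨⟪x0, u⟫, (sub_eq_zero.1 h).symm⟩)
    have hy1 : y - ⟪y, u⟫ • u ∉ Submodule.span ℝ {x0 - ⟪x0, u⟫ • u} := by
      intro h
      obtain ⟨c, hc⟩ := Submodule.mem_span_singleton.1 h
      refine hyp (Submodule.mem_span_pair.2 ⟨c, ⟪y, u⟫ - c * ⟪x0, u⟫, ?_⟩)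
      rw [eq_sub_iff_add_eq] at hc
      rw [← hc]
      simp only [inner_add_left, inner_smul_left, inner_sub_left, conj_trivial, huu]
      module
    have hlt := (sinePair_rpow_mid hp hu x0 y (g x0) (f y)).2
      (sinePair_pos_of_not_mem_span hx1 hy1).ne' (Or.inr hfy)
    have hy' : D (x0, y) = 0 := hy
    simp only [D, hF2, F1, F] at hy'
    linarith
  -- hence almost every point of `L` is reflected into `L`, and `L` is closed
  have hRae : ∀ᵐ y, y ∈ L → y - (2 * ⟪y, u⟫) • u ∈ L := by
    have := (ae_restrict_iff' hgL.meas).1 hf0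
    filter_upwards [this] with y hy hyL
    have h1 := (hmem y).1 hyL
    rwa [hy hyL, mul_zero, zero_smul, add_zero] at h1
  have hcl : IsClosed {y : E | y - (2 * ⟪y, u⟫) • u ∈ L} :=
    hL.compact.isClosed.preimage (by fun_prop)
  have hdense : interior L ⊆ {y : E | y - (2 * ⟪y, u⟫) • u ∈ L} := by
    intro x hx
    rw [← hcl.closure_eq]
    refine mem_closure_iff.2 fun o ho hxo => ?_
    have hpos : 0 < volume (o ∩ interior L) :=
      (ho.inter isOpen_interior).measure_pos volume ⟨x, hxo, hx⟩
    by_contra hne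
    rw [not_nonempty_iff_eq_empty] at hne
    refine hpos.ne' (measure_mono_null ?_ (ae_iff.1 hRae))
    rintro y ⟨hyo, hyL⟩ hcon
    have : y ∈ o ∩ {y : E | y - (2 * ⟪y, u⟫) • u ∈ L} := ⟨hyo, hcon (interior_subset hyL)⟩
    rw [hne] at this
    exact this
  intro x hx
  have hxc : x ∈ closure (interior L) := by
    rw [hL.convex.closure_interior_eq_closure_of_nonempty_interior hL.int]
    exact subset_closure hx
  exact (hcl.closure_subset_iff.2 hdense) hxc

/-- Every maximising body is a ball: reflections move a point of maximal norm to any other point of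
that norm. -/
lemma IsBody.eq_closedBall (hn : 3 ≤ n) (hp : 1 ≤ p) (hL : IsBody L)
    (hmax : ∀ K : Set E, IsGood K → volProd n p K ≤ volProd n p L) :
    ∃ r > 0, L = closedBall 0 r := by
  obtain ⟨z, hz, hzmax⟩ := hL.compact.exists_isMaxOn (hL.int.mono interior_subset)
    continuous_norm.continuousOn
  have hsphere : ∀ x : E, ‖x‖ = ‖z‖ → x ∈ L := by
    intro x hx
    by_cases hzx : z - x = 0
    · rwa [← sub_eq_zero.1 hzx]
    have h0 : 0 < ‖z - x‖ := norm_pos_iff.2 hzx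
    have hu : ‖‖z - x‖⁻¹ • (z - x)‖ = 1 := by
      rw [norm_smul, norm_inv, norm_norm, inv_mul_cancel₀ h0.ne']
    have h1 := hL.reflect_mem hn hp hmax hu z hz
    rw [← reflection_formula hu] at h1
    have h2 : Submodule.span ℝ {‖z - x‖⁻¹ • (z - x)} = Submodule.span ℝ {z - x} :=
      Submodule.span_singleton_smul_eq (IsUnit.mk0 _ (inv_pos.2 h0).ne') _
    simp only [h2] at h1
    rwa [Submodule.reflection_sub hx.symm] at h1
  have hz0 : 0 < ‖z‖ := by
    by_contra h
    have hsub : L ⊆ (Submodule.span ℝ {z} : Set E) := by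
      intro x hx
      have h1 : ‖x‖ ≤ ‖z‖ := hzmax hx
      have : x = 0 := norm_le_zero_iff.1 (h1.trans (not_lt.1 h))
      rw [this]
      exact Submodule.zero_mem _
    exact hL.isGood.ne_zero (measure_mono_null hsub (volume_span_singleton (by omega) z))
  refine ⟨‖z‖, hz0, Subset.antisymm (fun x hx => ?_) (fun x hx => ?_)⟩
  · rw [mem_closedBall_zero_iff]
    exact hzmax hx
  · rw [mem_closedBall_zero_iff] at hx
    by_cases hx0 : x = 0
    · have := hL.convex hz (hL.symm z hz) (show (0:ℝ) ≤ 1 / 2 by norm_num)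
        (show (0:ℝ) ≤ 1 / 2 by norm_num) (by norm_num)
      rw [hx0]
      simpa using this
    have hxn : 0 < ‖x‖ := norm_pos_iff.2 hx0
    have hy : ‖(‖z‖ / ‖x‖) • x‖ = ‖z‖ := by
      rw [norm_smul, Real.norm_of_nonneg (by positivity), div_mul_cancel₀ _ hxn.ne']
    have h1 := hsphere _ hy
    have hq1 : ‖x‖ / ‖z‖ ≤ 1 := (div_le_one hz0).2 hx
    have hq0 : 0 ≤ ‖x‖ / ‖z‖ := by positivity
    have := hL.convex h1 (hL.symm _ h1) (show 0 ≤ (1 + ‖x‖ / ‖z‖) / 2 by linarith)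
      (show 0 ≤ (1 - ‖x‖ / ‖z‖) / 2 by linarith) (by ring)
    convert this using 1
    rw [smul_neg, smul_smul, smul_smul, ← sub_eq_add_neg, ← sub_smul]
    have e : (1 + ‖x‖ / ‖z‖) / 2 * (‖z‖ / ‖x‖) - (1 - ‖x‖ / ‖z‖) / 2 * (‖z‖ / ‖x‖) = 1 := by
      field_simp
      ring
    rw [e, one_smul]

end Steiner

/-! ### The moment of the unit ball -/

section Ball

variable {n : ℕ} {p : ℝ} {K L : Set (EuclideanSpace ℝ (Fin n))}

local notation "E" => EuclideanSpace ℝ (Fin n)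

lemma isGood_ball {r : ℝ} (hr : 0 < r) : IsGood (ball (0 : E) r) :=
  ⟨measurableSet_ball, isBounded_ball, (measure_ball_pos volume 0 hr).ne'⟩

lemma lintegral_exp_neg_Ioi (a : ℝ) :
    ∫⁻ s in Ioi a, ENNReal.ofReal (Real.exp (-s)) = ENNReal.ofReal (Real.exp (-a)) := by
  rw [← integral_exp_neg_Ioi a, ofReal_integral_eq_lintegral_ofReal
    (integrableOn_exp_neg_Ioi a) (ae_of_all _ fun s => (Real.exp_pos _).le)]

/-- The Gaussian moment by layers: writing `exp (-‖y‖²)` as the integral of `exp (-s)` over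
`s > ‖y‖²` reduces it to the moments of the balls of radius `√s`. -/
lemma gauss_layers (hp : 1 ≤ p) (e : E) :
    ∫ y : E, sinePair e y ^ p * Real.exp (-‖y‖ ^ 2) =
      Real.Gamma (((n : ℝ) + p) / 2 + 1) * sineMoment p (ball (0 : E) 1) e := by
  have hp0 : 0 ≤ p := by linarith
  have hJ : 0 ≤ sineMoment p (ball (0 : E) 1) e :=
    integral_nonneg fun y => Real.rpow_nonneg (Real.sqrt_nonneg _) _
  have hpos : ∀ y : E, 0 ≤ sinePair e y ^ p := fun y => Real.rpow_nonneg (Real.sqrt_nonneg _) _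
  have hcont := continuous_sinePair_right (n := n) hp0 e
  set g : E → ℝ≥0∞ := fun y => ENNReal.ofReal (sinePair e y ^ p) with hg
  have hgm : Measurable g := hcont.measurable.ennreal_ofReal
  have key : ∫⁻ y : E, ENNReal.ofReal (sinePair e y ^ p * Real.exp (-‖y‖ ^ 2)) =
      ENNReal.ofReal (Real.Gamma (((n : ℝ) + p) / 2 + 1) * sineMoment p (ball (0 : E) 1) e) := by
    have hS : MeasurableSet {z : E × ℝ | ‖z.1‖ ^ 2 < z.2} :=
      (isOpen_lt (by fun_prop) (by fun_prop)).measurableSet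
    calc ∫⁻ y : E, ENNReal.ofReal (sinePair e y ^ p * Real.exp (-‖y‖ ^ 2))
        = ∫⁻ y : E, ∫⁻ s : ℝ, {z : E × ℝ | ‖z.1‖ ^ 2 < z.2}.indicator
            (fun z => g z.1 * ENNReal.ofReal (Real.exp (-z.2))) (y, s) := by
          refine lintegral_congr fun y => ?_
          rw [ENNReal.ofReal_mul (hpos y), ← lintegral_exp_neg_Ioi,
            ← lintegral_const_mul _ (by fun_prop), ← lintegral_indicator measurableSet_Ioi]
          rfl
      _ = ∫⁻ s : ℝ, ∫⁻ y : E, {z : E × ℝ | ‖z.1‖ ^ 2 < z.2}.indicator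
            (fun z => g z.1 * ENNReal.ofReal (Real.exp (-z.2))) (y, s) := by
          refine lintegral_lintegral_swap (Measurable.aemeasurable ?_)
          exact Measurable.indicator (by fun_prop) hS
      _ = ∫⁻ s in Ioi (0 : ℝ), ENNReal.ofReal (Real.exp (-s) *
            s ^ ((((n : ℝ) + p) / 2 + 1) - 1) * sineMoment p (ball (0 : E) 1) e) := by
          rw [← lintegral_indicator measurableSet_Ioi]
          refine lintegral_congr fun s => ?_
          by_cases hs : 0 < s
          · have hsq : 0 < Real.sqrt s := Real.sqrt_pos.2 hs
            have hb : ball (0 : E) (Real.sqrt s) = Real.sqrt s • ball (0 : E) 1 :=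
              (smul_unitBall_of_pos hsq).symm
            have h1 : ∀ y : E, {z : E × ℝ | ‖z.1‖ ^ 2 < z.2}.indicator
                (fun z => g z.1 * ENNReal.ofReal (Real.exp (-z.2))) (y, s) =
                (ball (0 : E) (Real.sqrt s)).indicator
                  (fun y => g y * ENNReal.ofReal (Real.exp (-s))) y := by
              intro y
              have : ((y, s) ∈ {z : E × ℝ | ‖z.1‖ ^ 2 < z.2}) ↔ y ∈ ball (0 : E) (Real.sqrt s) := by
                rw [mem_ball_zero_iff, Real.lt_sqrt (norm_nonneg _)]; rfl
              by_cases hy : y ∈ ball (0 : E) (Real.sqrt s)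
              · rw [indicator_of_mem (this.2 hy), indicator_of_mem hy]
              · rw [indicator_of_notMem (fun h => hy (this.1 h)), indicator_of_notMem hy]
            simp_rw [h1]
            rw [lintegral_indicator measurableSet_ball, lintegral_mul_const _ hgm,
              indicator_of_mem (mem_Ioi.2 hs), hg,
              ← ofReal_integral_eq_lintegral_ofReal
                (integrableOn_sinePair (isGood_ball hsq) hp0 e) (ae_of_all _ hpos)]
            change ENNReal.ofReal (sineMoment p (ball (0 : E) (Real.sqrt s)) e) * _ = _
            rw [hb, sineMoment_smul_set hp0 hsq, mul_comm,
              ← ENNReal.ofReal_mul (Real.exp_pos _).le, mul_assoc (Real.exp (-s))]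
            congr 3
            rw [← Real.rpow_natCast, ← Real.rpow_add hsq, Real.sqrt_eq_rpow, ← Real.rpow_mul hs.le]
            congr 1; ring
          · rw [indicator_of_notMem (by simpa using hs)]
            refine (lintegral_congr fun y => indicator_of_notMem ?_ _).trans lintegral_zero
            intro (h : ‖y‖ ^ 2 < s)
            exact hs ((sq_nonneg _).trans_lt h)
      _ = _ := by
          have hpos' : 0 < ((n : ℝ) + p) / 2 + 1 := by positivity
          rw [← ofReal_integral_eq_lintegral_ofReal
            ((Real.GammaIntegral_convergent hpos').mul_const _), integral_mul_const,
            ← Real.Gamma_eq_integral hpos']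
          filter_upwards [self_mem_ae_restrict measurableSet_Ioi] with s (hs : 0 < s)
          positivity
  rw [integral_eq_lintegral_of_nonneg_ae
    (ae_of_all _ fun y => mul_nonneg (hpos y) (Real.exp_pos _).le)
    (hcont.mul (by fun_prop)).aestronglyMeasurable, key, ENNReal.toReal_ofReal]
  exact mul_nonneg (Real.Gamma_pos_of_pos (by positivity)).le hJ

lemma volume_real_ball (hn : 0 < n) : volume.real (ball (0 : E) 1) = omegaVol n := by
  haveI : Nonempty (Fin n) := ⟨⟨0, hn⟩⟩
  have hG := Real.Gamma_pos_of_pos (show (0 : ℝ) < n / 2 + 1 by positivity)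
  rw [measureReal_def, EuclideanSpace.volume_ball, ENNReal.ofReal_one, one_pow, one_mul,
    ENNReal.toReal_ofReal (by positivity), omegaVol, Fintype.card_fin, add_comm (1 : ℝ),
    Real.sqrt_eq_rpow, ← Real.rpow_natCast, ← Real.rpow_mul Real.pi_pos.le]
  congr 2; ring

/-- The Gaussian moment in coordinates along and orthogonal to the unit vector `e`. -/
lemma gauss_product {m : ℕ} (hm : 0 < m) (hp : 1 ≤ p) {e : EuclideanSpace ℝ (Fin (m + 1))}
    (he : ‖e‖ = 1) :
    ∫ y : EuclideanSpace ℝ (Fin (m + 1)), sinePair e y ^ p * Real.exp (-‖y‖ ^ 2) =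
      √Real.pi * (m * omegaVol m * (1 / 2 * Real.Gamma (((m : ℝ) + p) / 2))) := by
  have hp0 : 0 ≤ p := by linarith
  obtain ⟨b, hb⟩ := exists_basis (Nat.succ_pos m) he
  have hb0 : b 0 = e := hb
  let φ : EuclideanSpace ℝ (Fin (m + 1)) → ℝ × EuclideanSpace ℝ (Fin m) := fun y =>
    (b.repr y 0, WithLp.toLp 2 (fun i : Fin m => b.repr y i.succ))
  have hφ : MeasurePreserving φ := by
    have h1 := b.measurePreserving_repr
    have h2 := (PiLp.volume_preserving_ofLp (ι := Fin (m + 1)))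
    have h3 := volume_preserving_piFinSuccAbove (fun _ : Fin (m + 1) => ℝ) 0
    have h4 := (MeasurePreserving.id (volume : Measure ℝ)).prod
      (PiLp.volume_preserving_toLp (Fin m))
    exact h4.comp (h3.comp (h2.comp h1))
  have hnorm : ∀ y, ‖y‖ ^ 2 = (φ y).1 ^ 2 + ‖(φ y).2‖ ^ 2 := by
    intro y
    rw [← b.repr.norm_map y, EuclideanSpace.norm_sq_eq, Fin.sum_univ_succ,
      EuclideanSpace.norm_sq_eq]
    simp [φ]
  have hinner : ∀ y, ⟪y, e⟫ = (φ y).1 := by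
    intro y
    simp only [φ, b.repr_apply_apply, hb0, real_inner_comm]
  have hsine : ∀ y, sinePair e y = ‖(φ y).2‖ := by
    intro y
    rw [sinePair, he, real_inner_comm, hinner, hnorm,
      show (1 : ℝ) ^ 2 * ((φ y).1 ^ 2 + ‖(φ y).2‖ ^ 2) - (φ y).1 ^ 2 = ‖(φ y).2‖ ^ 2 by ring,
      Real.sqrt_sq (norm_nonneg _)]
  have hfc : Continuous fun z : ℝ × EuclideanSpace ℝ (Fin m) =>
      Real.exp (-1 * z.1 ^ 2) * (‖z.2‖ ^ p * Real.exp (-‖z.2‖ ^ (2 : ℝ))) := by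
    refine Continuous.mul (by fun_prop) (Continuous.mul ?_ ?_)
    · exact Continuous.rpow_const (by fun_prop) (fun _ => Or.inr hp0)
    · exact (Continuous.rpow_const (by fun_prop) (fun _ => Or.inr (by norm_num))).neg.rexp
  calc ∫ y : EuclideanSpace ℝ (Fin (m + 1)), sinePair e y ^ p * Real.exp (-‖y‖ ^ 2)
      = ∫ y : EuclideanSpace ℝ (Fin (m + 1)), Real.exp (-1 * (φ y).1 ^ 2) *
          (‖(φ y).2‖ ^ p * Real.exp (-‖(φ y).2‖ ^ (2 : ℝ))) := by
        refine integral_congr_ae (ae_of_all _ fun y => ?_)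
        simp only
        rw [hsine, hnorm, neg_add, Real.exp_add, Real.rpow_two, neg_one_mul]
        ring
    _ = ∫ z : ℝ × EuclideanSpace ℝ (Fin m), Real.exp (-1 * z.1 ^ 2) *
          (‖z.2‖ ^ p * Real.exp (-‖z.2‖ ^ (2 : ℝ))) := by
        rw [← hφ.map_eq, integral_map hφ.measurable.aemeasurable hfc.aestronglyMeasurable]
    _ = (∫ t : ℝ, Real.exp (-1 * t ^ 2)) * ∫ w : EuclideanSpace ℝ (Fin m),
          ‖w‖ ^ p * Real.exp (-‖w‖ ^ (2 : ℝ)) :=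
        integral_prod_mul (μ := (volume : Measure ℝ)) (fun t : ℝ => Real.exp (-1 * t ^ 2))
          (fun w : EuclideanSpace ℝ (Fin m) => ‖w‖ ^ p * Real.exp (-‖w‖ ^ (2 : ℝ)))
    _ = _ := by
        haveI : Nontrivial (EuclideanSpace ℝ (Fin m)) := by
          haveI : Nonempty (Fin m) := ⟨⟨0, hm⟩⟩
          infer_instance
        rw [integral_gaussian, div_one, integral_fun_norm_addHaar volume
          (fun r : ℝ => r ^ p * Real.exp (-r ^ (2 : ℝ))), finrank_euclideanSpace_fin,
          volume_real_ball hm, nsmul_eq_mul, smul_eq_mul, mul_assoc]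
        congr 3
        have h : ∫ y in Ioi (0 : ℝ), y ^ (m - 1) • (y ^ p * Real.exp (-y ^ (2 : ℝ))) =
            ∫ y in Ioi (0 : ℝ), y ^ ((m : ℝ) - 1 + p) * Real.exp (-y ^ (2 : ℝ)) := by
          refine setIntegral_congr_fun measurableSet_Ioi fun y (hy : 0 < y) => ?_
          simp only [smul_eq_mul]
          rw [← mul_assoc, ← Real.rpow_natCast, ← Real.rpow_add hy, Nat.cast_sub hm, Nat.cast_one]
        have hm1 : (1 : ℝ) ≤ m := by exact_mod_cast hm
        rw [h, integral_rpow_mul_exp_neg_rpow (by norm_num) (by linarith)]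
        congr 2; ring

/-- The constant `c̃_{n,p}` is the normalisation for which the unit ball is its own polar. -/
lemma sineMoment_unitBall (hn : 2 ≤ n) (hp : 1 ≤ p) {e : E} (he : ‖e‖ = 1) :
    sineMoment p (ball (0 : E) 1) e = tildeC n p * omegaVol n := by
  obtain ⟨m, rfl⟩ : ∃ m, n = m + 1 := ⟨n - 1, by omega⟩
  have hm : 0 < m := by omega
  have hm1 : (1 : ℝ) ≤ m := by exact_mod_cast hm
  have h := (gauss_layers hp e).symm.trans (gauss_product hm hp he)
  have hw := (omegaVol_pos (q := ((m + 1 : ℕ) : ℝ)) (by push_cast; linarith)).ne'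
  push_cast at h hw ⊢
  have e1 : omegaVol ((m : ℝ) + 1 + p - 2) =
      Real.pi ^ (((m : ℝ) + p) / 2 - 1) * √Real.pi / Real.Gamma (((m : ℝ) + 1 + p) / 2) := by
    rw [omegaVol, Real.sqrt_eq_rpow, ← Real.rpow_add Real.pi_pos]
    congr 2 <;> ring
  have e2 : omegaVol ((m : ℝ) + 1 + p - 3) =
      Real.pi ^ (((m : ℝ) + p) / 2 - 1) / Real.Gamma (((m : ℝ) + p) / 2) := by
    rw [omegaVol]
    congr 2 <;> ring
  have hs : ((m : ℝ) + 1 + p) / 2 ≠ 0 := by positivity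
  rw [Real.Gamma_add_one hs] at h
  have hG1 := (Real.Gamma_pos_of_pos (show 0 < ((m : ℝ) + 1 + p) / 2 by positivity)).ne'
  have hG2 := (Real.Gamma_pos_of_pos (show 0 < ((m : ℝ) + p) / 2 by positivity)).ne'
  have hpi := (Real.rpow_pos_of_pos Real.pi_pos (((m : ℝ) + p) / 2 - 1)).ne'
  have hmp : (m : ℝ) + 1 + p ≠ 0 := by positivity
  rw [tildeC]
  push_cast
  rw [e1, e2, add_sub_cancel_right]
  generalize Real.pi ^ (((m : ℝ) + p) / 2 - 1) = P at *
  generalize Real.Gamma (((m : ℝ) + 1 + p) / 2) = G1 at *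
  generalize Real.Gamma (((m : ℝ) + p) / 2) = G2 at *
  generalize sineMoment p (ball (0 : EuclideanSpace ℝ (Fin (m + 1))) 1) e = J at *
  generalize omegaVol ((m : ℝ) + 1) = W at *
  have : J = √Real.pi * (m * omegaVol m * (1 / 2 * G2)) / (((m : ℝ) + 1 + p) / 2 * G1) := by
    rw [← h]; field_simp
  rw [this]
  field_simp

lemma sineMoment_closedBall (hn : 2 ≤ n) (hp : 1 ≤ p) (x : E) :
    sineMoment p (closedBall (0 : E) 1) x = tildeC n p * omegaVol n * ‖x‖ ^ p := by
  have hp0 : 0 ≤ p := by linarith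
  have h1 : sineMoment p (closedBall (0 : E) 1) x = sineMoment p (ball (0 : E) 1) x := by
    haveI : Nonempty (Fin n) := ⟨⟨0, by omega⟩⟩
    refine setIntegral_congr_set (Filter.EventuallyEq.symm ?_)
    refine ae_eq_of_subset_of_measure_ge ball_subset_closedBall ?_
      measurableSet_ball.nullMeasurableSet measure_closedBall_lt_top.ne
    rw [Measure.addHaar_closedBall_eq_addHaar_ball]
  rw [h1]
  rcases eq_or_ne x 0 with rfl | hx
  · have := sineMoment_smul (K := ball (0 : E) 1) hp0 0 0
    rw [smul_zero, abs_zero, Real.zero_rpow (by linarith), zero_mul] at this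
    rw [this, norm_zero, Real.zero_rpow (by linarith), mul_zero]
  · have hx' : ‖x‖ ≠ 0 := norm_ne_zero_iff.2 hx
    have he : ‖(‖x‖⁻¹ • x : E)‖ = 1 := by
      rw [norm_smul, norm_inv, norm_norm, inv_mul_cancel₀ hx']
    have := sineMoment_smul (K := ball (0 : E) 1) hp0 ‖x‖ (‖x‖⁻¹ • x)
    rw [smul_inv_smul₀ hx', sineMoment_unitBall hn hp he, abs_norm] at this
    rw [this]; ring

lemma volume_real_closedBall (hn : 0 < n) : volume.real (closedBall (0 : E) 1) = omegaVol n := by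
  haveI : Nonempty (Fin n) := ⟨⟨0, hn⟩⟩
  rw [← volume_real_ball hn, measureReal_def, Measure.addHaar_closedBall_eq_addHaar_ball,
    measureReal_def]

lemma polar_closedBall_one (hn : 2 ≤ n) (hp : 1 ≤ p) :
    sineCentroidPolar n p (closedBall (0 : E) 1) = closedBall (0 : E) 1 := by
  ext x
  have hc : 0 < tildeC n p * omegaVol n :=
    mul_pos (tildeC_pos hn (by linarith)) (omegaVol_pos (by linarith [n.cast_nonneg (α := ℝ)]))
  rw [mem_polar, sineMoment_closedBall hn hp, volume_real_closedBall (by omega),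
    mul_le_iff_le_one_right hc, mem_closedBall_zero_iff]
  conv_lhs => rw [← Real.one_rpow p]
  exact Real.rpow_le_rpow_iff (norm_nonneg _) zero_le_one (by linarith)

lemma volProd_closedBall (hn : 2 ≤ n) (hp : 1 ≤ p) {r : ℝ} (hr : 0 < r) :
    volProd n p (closedBall (0 : E) r) = omegaVol n ^ 2 := by
  have h : closedBall (0 : E) r = r • closedBall (0 : E) 1 := by
    rw [_root_.smul_closedBall _ _ zero_le_one, smul_zero, Real.norm_of_nonneg hr.le, mul_one]
  rw [h, volProd_smul (by linarith) hr, volProd, polar_closedBall_one hn hp,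
    volume_real_closedBall (by omega), sq]

end Ball

/-! ### Star bodies and the equality case -/

section Final

variable {n : ℕ} {p : ℝ} {K L : Set (EuclideanSpace ℝ (Fin n))}

local notation "E" => EuclideanSpace ℝ (Fin n)

lemma unit_mem_sphere {x : E} (hx : x ≠ 0) : ‖x‖⁻¹ • x ∈ sphere (0 : E) 1 := by
  rw [mem_sphere_zero_iff_norm, norm_smul, norm_inv, norm_norm,
    inv_mul_cancel₀ (norm_ne_zero_iff.2 hx)]

lemma IsStarBody.mem_iff (hK : IsStarBody K) {x : E} (hx : x ≠ 0) :
    x ∈ K ↔ ‖x‖ ≤ radialFn K (‖x‖⁻¹ • x) := by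
  rw [← hK.2.2.2 _ (unit_mem_sphere hx) _ (norm_nonneg x),
    smul_inv_smul₀ (norm_ne_zero_iff.2 hx)]

lemma sphere_nonempty (hn : 0 < n) : (sphere (0 : E) 1).Nonempty :=
  haveI : Nonempty (Fin n) := ⟨⟨0, hn⟩⟩
  NormedSpace.sphere_nonempty.2 zero_le_one

/-- A star body is the continuous image of `[0,1] × S^{n-1}` under `(t, u) ↦ t ρ_K(u) u`. -/
lemma IsStarBody.isCompact (hn : 0 < n) (hK : IsStarBody K) : IsCompact K := by
  obtain ⟨u₀, hu₀⟩ := sphere_nonempty hn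
  have h : K = (fun z : ℝ × E => (z.1 * radialFn K z.2) • z.2) '' (Icc 0 1 ×ˢ sphere (0 : E) 1) := by
    ext x
    constructor
    · intro hx
      rcases eq_or_ne x 0 with rfl | hx0
      · exact ⟨(0, u₀), ⟨⟨le_rfl, zero_le_one⟩, hu₀⟩, by simp⟩
      · have hu := unit_mem_sphere hx0
        have hr := hK.2.1 _ hu
        refine ⟨(‖x‖ / radialFn K (‖x‖⁻¹ • x), ‖x‖⁻¹ • x), ⟨⟨by positivity, ?_⟩, hu⟩, ?_⟩
        · rw [div_le_one hr]; exact (hK.mem_iff hx0).1 hx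
        · simp only
          rw [div_mul_cancel₀ _ hr.ne', smul_inv_smul₀ (norm_ne_zero_iff.2 hx0)]
    · rintro ⟨⟨t, u⟩, ⟨⟨ht0, ht1⟩, hu⟩, rfl⟩
      have hr := hK.2.1 u hu
      exact (hK.2.2.2 u hu _ (mul_nonneg ht0 hr.le)).2 (mul_le_of_le_one_left hr.le ht1)
  rw [h]
  refine (isCompact_Icc.prod (isCompact_sphere _ _)).image_of_continuousOn ?_
  refine ContinuousOn.smul (continuousOn_fst.mul ?_) continuousOn_snd
  exact hK.2.2.1.comp continuousOn_snd fun z hz => hz.2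

lemma IsStarBody.zero_mem_interior (hn : 0 < n) (hK : IsStarBody K) : 0 ∈ interior K := by
  obtain ⟨u₀, hu₀, hmin⟩ :=
    (isCompact_sphere (0 : E) 1).exists_isMinOn (sphere_nonempty hn) hK.2.2.1
  refine mem_interior.2 ⟨ball 0 (radialFn K u₀), fun x hx => ?_, isOpen_ball,
    mem_ball_self (hK.2.1 _ hu₀)⟩
  rcases eq_or_ne x 0 with rfl | hx0
  · exact hK.1.1
  · exact (hK.mem_iff hx0).2 ((mem_ball_zero_iff.1 hx).le.trans (hmin (unit_mem_sphere hx0)))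

lemma IsStarBody.isGood (hn : 0 < n) (hK : IsStarBody K) : IsGood K :=
  ⟨(hK.isCompact hn).measurableSet, (hK.isCompact hn).isBounded,
    (Measure.measure_pos_of_nonempty_interior _ ⟨0, hK.zero_mem_interior hn⟩).ne'⟩

/-- `t • x` is interior to `K` for `x ∈ K` and `0 < t < 1`, by continuity of the radial function. -/
lemma IsStarBody.subset_closure (hn : 0 < n) (hK : IsStarBody K) : K ⊆ closure (interior K) := by
  intro x hx
  rcases eq_or_ne x 0 with rfl | hx0
  · exact _root_.subset_closure (hK.zero_mem_interior hn)
  have hnx : 0 < ‖x‖ := norm_pos_iff.2 hx0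
  have hmem : ∀ t ∈ Ioo (0 : ℝ) 1, t • x ∈ interior K := by
    rintro t ⟨ht0, ht1⟩
    have htx : t • x ≠ 0 := smul_ne_zero ht0.ne' hx0
    have hcont : ContinuousOn (fun y : E => radialFn K (‖y‖⁻¹ • y) - ‖y‖) {0}ᶜ := by
      refine ContinuousOn.sub ?_ continuous_norm.continuousOn
      refine hK.2.2.1.comp ?_ fun y hy => unit_mem_sphere hy
      exact ContinuousOn.smul
        (continuous_norm.continuousOn.inv₀ fun y hy => norm_ne_zero_iff.2 hy) continuousOn_id
    have hat := hcont.continuousAt (isOpen_compl_singleton.mem_nhds htx)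
    have hval : 0 < radialFn K (‖t • x‖⁻¹ • t • x) - ‖t • x‖ := by
      have hu : ‖t • x‖⁻¹ • t • x = ‖x‖⁻¹ • x := by
        rw [norm_smul, Real.norm_of_nonneg ht0.le, smul_smul]
        congr 1
        field_simp
      rw [hu, norm_smul, Real.norm_of_nonneg ht0.le]
      have := (hK.mem_iff hx0).1 hx
      nlinarith
    refine mem_interior_iff_mem_nhds.2 ?_
    filter_upwards [hat.eventually (lt_mem_nhds hval), isOpen_compl_singleton.mem_nhds htx]
      with y hy hy0
    exact (hK.mem_iff hy0).2 (by linarith)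
  have hlim : Filter.Tendsto (fun t : ℝ => t • x) (nhdsWithin 1 (Iio 1)) (nhds x) := by
    have : ContinuousAt (fun t : ℝ => t • x) 1 := by fun_prop
    simpa using this.tendsto.mono_left nhdsWithin_le_nhds
  refine mem_closure_of_tendsto hlim ?_
  filter_upwards [Ioo_mem_nhdsLT (zero_lt_one' ℝ)] with t ht using hmem t ht

/-- All dilates of `Λ_p°(r Bⁿ)` are balls. -/
lemma sublevel_closedBall (hn : 2 ≤ n) (hp : 1 ≤ p) {r τ : ℝ} (hr : 0 < r) (hτ : 0 < τ) :
    ∃ s > 0, {x : E | sineMoment p (closedBall (0 : E) r) x ≤ τ} = closedBall 0 s := by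
  have hc : 0 < tildeC n p * omegaVol n :=
    mul_pos (tildeC_pos hn (by linarith)) (omegaVol_pos (by linarith [n.cast_nonneg (α := ℝ)]))
  have hC : 0 < r ^ n * r ^ p * (tildeC n p * omegaVol n) := by positivity
  have h : closedBall (0 : E) r = r • closedBall (0 : E) 1 := by
    rw [_root_.smul_closedBall _ _ zero_le_one, smul_zero, Real.norm_of_nonneg hr.le, mul_one]
  refine ⟨(τ / (r ^ n * r ^ p * (tildeC n p * omegaVol n))) ^ p⁻¹, by positivity, ?_⟩
  ext x
  rw [mem_ofPred_eq, h, sineMoment_smul_set (by linarith) hr, sineMoment_closedBall hn hp,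
    mem_closedBall_zero_iff,
    Real.le_rpow_inv_iff_of_pos (norm_nonneg _) (by positivity) (by linarith), le_div_iff₀ hC,
    ← mul_assoc, mul_comm]

/-- A star body that agrees with a ball up to a null set is that ball, being closed and the closure
of its interior. -/
lemma IsStarBody.eq_closedBall_of_ae (hn : 0 < n) (hK : IsStarBody K) {s : ℝ} (hs : 0 < s)
    (h : K =ᵐ[volume] closedBall (0 : E) s) : K = closedBall 0 s := by
  have hcl := (hK.isCompact hn).isClosed
  obtain ⟨h1, h2⟩ := ae_eq_set.1 h
  apply Subset.antisymm
  · have : interior K \ closedBall (0 : E) s = ∅ :=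
      ((isOpen_interior.sdiff isClosed_closedBall).measure_eq_zero_iff volume).1
        (measure_mono_null (sdiff_subset_sdiff_left interior_subset) h1)
    exact (hK.subset_closure hn).trans
      (closure_minimal (sdiff_eq_empty.1 this) isClosed_closedBall)
  · have : ball (0 : E) s \ K = ∅ :=
      ((isOpen_ball.sdiff hcl).measure_eq_zero_iff volume).1
        (measure_mono_null (sdiff_subset_sdiff_left ball_subset_closedBall) h2)
    rw [← closure_ball _ hs.ne']
    exact closure_minimal (sdiff_eq_empty.1 this) hcl

/-- The `L_p`-sine Blaschke–Santaló inequality. -/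
lemma volProd_le (hn : 3 ≤ n) (hp : 1 ≤ p) (hK : IsGood K) : volProd n p K ≤ omegaVol n ^ 2 := by
  obtain ⟨L, hL, hmax⟩ := exists_max (n := n) hn hp
  obtain ⟨r, hr, rfl⟩ := hL.eq_closedBall hn hp hmax
  rw [← volProd_closedBall (by omega) hp hr]
  exact hmax K hK

lemma volProd_eq_iff (hn : 3 ≤ n) (hp : 1 ≤ p) (hK : IsStarBody K) :
    volProd n p K = omegaVol n ^ 2 ↔ ∃ r : ℝ, 0 < r ∧ K = closedBall (0 : E) r := by
  constructor
  · intro h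
    have hg := hK.isGood (by omega)
    have hbody := isBody_polar (by omega) hp hg
    obtain ⟨hle, heq⟩ := volProd_le_polar (by omega) hp hg
    have hpol : volProd n p (sineCentroidPolar n p K) = omegaVol n ^ 2 :=
      le_antisymm (volProd_le hn hp hbody.isGood) (h ▸ hle)
    obtain ⟨r, hr, hball⟩ := hbody.eq_closedBall hn hp
      fun M hM => hpol ▸ volProd_le hn hp hM
    obtain ⟨τ, hτ, hae⟩ := heq (h.trans hpol.symm)
    rw [hball] at hae
    obtain ⟨s, hs, hset⟩ := sublevel_closedBall (n := n) (by omega) hp hr hτ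
    rw [hset] at hae
    exact ⟨s, hs, hK.eq_closedBall_of_ae (by omega) hs hae⟩
  · rintro ⟨r, hr, rfl⟩
    exact volProd_closedBall (by omega) hp hr

end Final

end Auxiliary

/-- equality in the `L_p`-sine Blaschke–Santaló inequality for `n ≥ 3`. -/
theorem lp_sine_blaschke_santalo_equality {n : ℕ} (hn : 3 ≤ n) {p : ℝ} (hp : 1 ≤ p)
    {K : Set (EuclideanSpace ℝ (Fin n))} (hK : IsStarBody K) :
    volume K * volume (sineCentroidPolar n p K) = ENNReal.ofReal (omegaVol n ^ 2) ↔
      ∃ r : ℝ, 0 < r ∧ K = closedBall (0 : EuclideanSpace ℝ (Fin n)) r := by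
  rw [← volProd_eq_iff hn hp hK]
  have hg := hK.isGood (by omega)
  have h1 : volume K ≠ ∞ := (hK.isCompact (by omega)).measure_lt_top.ne
  have h2 : volume (sineCentroidPolar n p K) ≠ ∞ :=
    (isBody_polar (by omega) hp hg).compact.measure_lt_top.ne
  rw [volProd, measureReal_def, measureReal_def, ← ENNReal.toReal_mul,
    ← ENNReal.toReal_eq_toReal_iff' (ENNReal.mul_ne_top h1 h2) ENNReal.ofReal_ne_top,
    ENNReal.toReal_ofReal (sq_nonneg _)]
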